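/- arXiv:2601.15318 — 3 statements merged into one kernel-verified Lean document; each statement's English description precedes it below -/
import Mathlib

section
/- Let r_n be the proportion, among all invertible n×n sign matrices C, of those satisfying (C⁻¹𝟙)_i > 0 for all i. Then r_n ∼ 1/2ⁿ, that is, lim_{n→∞} 2ⁿ · r_n = 1. -/
open Matrix

/-- A sign matrix: an `n×n` real matrix with all entries in `{−1,1}`. -/
def IsSignMatrix {n : ℕ} (C : Matrix (Fin n) (Fin n) ℝ) : Prop :=
  ∀ i j, C i j = 1 ∨ C i j = -1

/-- `r_n`: the proportion, among all invertible `n×n` sign matrices `C`, of those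
with `(C⁻¹𝟙)_i > 0` for all `i`. -/
noncomputable def rn (n : ℕ) : ℝ :=
  (Nat.card {C : Matrix (Fin n) (Fin n) ℝ //
      IsSignMatrix C ∧ IsUnit C ∧ ∀ i, 0 < (C⁻¹ *ᵥ (1 : Fin n → ℝ)) i} : ℝ) /
  (Nat.card {C : Matrix (Fin n) (Fin n) ℝ // IsSignMatrix C ∧ IsUnit C} : ℝ)

/-!
Flipping the signs of the columns of a sign matrix `C` flips the signs of the coordinates of the
solution `x` of `C x = 𝟙`. All sign patterns of `x` are therefore equally likely, and `2ⁿ r_n` is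
the probability, given that `C` is invertible, that no coordinate of `x` vanishes. By Cramer's rule
`x i = 0` means that `C` becomes singular when its column `i` is replaced by `𝟙`. Up to signs of
the rows this replacement turns a uniform sign matrix into a uniform sign matrix, so it is singular
exactly as often as `C` itself. It remains to see that the singularity probability is `o(1/n)`.

For this, reduce modulo a prime `p` between `n³` and `2n³`. If `C` is singular, some row is
orthogonal to every normal vector `v` of the other rows. Write `P v` for the probability that a
random sign vector is orthogonal to `v`. If `P v ≤ 4/p`, this is unlikely, since the row is
independent of `v`. For the other, rich, vectors it suffices to bound the sum of `P v ^ (n - 1)`,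
the probability that `n - 1` given rows are orthogonal to `v`. There are few sparse `v`, and
`P v ≤ 1/2` for each of them. For the remaining rich `v`, following Kahn, Komlós and Szemerédi,
Fourier analysis and the Cauchy–Davenport inequality give `P v ≤ (2/3) Q v`, where `Q` is the
analogue of `P` for random vectors with mostly vanishing coordinates. Now `∑ v, Q v ^ (n - 1)` is
the expected number of vectors orthogonal to `n - 1` such random vectors; by Odlyzko's bound for the
probability of falling into a subspace it is at most `3p + p ^ √n`, so `(2/3) ^ (n - 1)` wins.
-/

section UniformProb

open Finset
open scoped BigOperators

variable {α β ι : Type*} [Fintype α] [Fintype β]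

/-- The probability that `P` holds at a uniformly random point of the finite type `α`. It is
written as a mean so that independence, conditioning and characters can be handled by exchanging
means. -/
noncomputable def uniformProb (P : α → Prop) : ℝ :=
  𝔼 x, {x | P x}.indicator 1 x

lemma uniformProb_eq_expect_ite (P : α → Prop) [DecidablePred P] :
    uniformProb P = 𝔼 x, if P x then 1 else 0 :=
  expect_congr rfl fun x _ ↦ by simp [Set.indicator_apply]

lemma uniformProb_eq_card_div_card (P : α → Prop) :
    uniformProb P = Nat.card {x // P x} / Fintype.card α := by
  classical
  rw [uniformProb_eq_expect_ite, Fintype.expect_eq_sum_div_card, sum_boole,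
    Nat.card_eq_fintype_card, Fintype.card_subtype]

lemma uniformProb_nonneg (P : α → Prop) : 0 ≤ uniformProb P :=
  expect_nonneg fun x _ ↦ Set.indicator_nonneg (fun _ _ ↦ zero_le_one) x

lemma uniformProb_mono {P Q : α → Prop} (h : ∀ x, P x → Q x) : uniformProb P ≤ uniformProb Q :=
  expect_le_expect fun x _ ↦
    Set.indicator_le_indicator_of_subset h (fun _ ↦ zero_le_one) x

lemma uniformProb_congr {P Q : α → Prop} (h : ∀ x, P x ↔ Q x) : uniformProb P = uniformProb Q :=
  congrArg uniformProb <| funext fun x ↦ propext (h x)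

lemma uniformProb_const_true [Nonempty α] : uniformProb (fun _ : α ↦ True) = 1 := by
  simp [uniformProb]

lemma uniformProb_le_one [Nonempty α] (P : α → Prop) : uniformProb P ≤ 1 :=
  uniformProb_const_true (α := α) ▸ uniformProb_mono fun _ _ ↦ trivial

lemma uniformProb_add_not [Nonempty α] (P : α → Prop) :
    uniformProb P + uniformProb (fun x ↦ ¬ P x) = 1 := by
  classical
  simp_rw [uniformProb_eq_expect_ite, ← expect_add_distrib]
  rw [← Fintype.expect_const (ι := α) (1 : ℝ)]
  exact expect_congr rfl fun x _ ↦ by by_cases h : P x <;> simp [h]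

lemma uniformProb_or_le (P Q : α → Prop) :
    uniformProb (fun x ↦ P x ∨ Q x) ≤ uniformProb P + uniformProb Q := by
  classical
  simp_rw [uniformProb_eq_expect_ite, ← expect_add_distrib]
  exact expect_le_expect fun x _ ↦ by by_cases hP : P x <;> by_cases hQ : Q x <;> simp [hP, hQ]

lemma uniformProb_exists_mem_le (s : Finset ι) (P : ι → α → Prop) :
    uniformProb (fun x ↦ ∃ i ∈ s, P i x) ≤ ∑ i ∈ s, uniformProb (P i) := by
  classical
  simp_rw [uniformProb_eq_expect_ite, ← expect_sum_comm]
  refine expect_le_expect fun x _ ↦ ?_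
  split_ifs with h
  · obtain ⟨i, hi, hPi⟩ := h
    calc (1 : ℝ) = if P i x then 1 else 0 := (if_pos hPi).symm
      _ ≤ ∑ j ∈ s, if P j x then 1 else 0 :=
          single_le_sum (f := fun j ↦ if P j x then (1 : ℝ) else 0)
            (fun j _ ↦ by positivity) hi
  · positivity

lemma uniformProb_exists_le [Fintype ι] (P : ι → α → Prop) :
    uniformProb (fun x ↦ ∃ i, P i x) ≤ ∑ i, uniformProb (P i) := by
  simpa only [mem_univ, true_and] using uniformProb_exists_mem_le univ P

lemma uniformProb_comp_equiv (e : α ≃ β) (P : β → Prop) :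
    uniformProb (fun x ↦ P (e x)) = uniformProb P :=
  Fintype.expect_equiv e _ _ fun _ ↦ rfl

lemma uniformProb_prod_le_of_forall_right [Nonempty β] {P : α × β → Prop} {ε : ℝ}
    (h : ∀ b, uniformProb (fun a ↦ P (a, b)) ≤ ε) : uniformProb P ≤ ε := by
  rw [uniformProb, ← univ_product_univ, expect_product, expect_comm]
  exact expect_le univ_nonempty fun b _ ↦ h b

lemma expect_pi_prod {K : Type*} [Field K] [CharZero K] [Fintype ι] [DecidableEq ι]
    (f : ι → α → K) : 𝔼 x : ι → α, ∏ i, f i (x i) = ∏ i, 𝔼 a, f i a := by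
  simp_rw [Fintype.expect_eq_sum_div_card, prod_div_distrib, prod_univ_sum,
    Fintype.piFinset_univ, prod_const, Fintype.card_fun, card_univ, Nat.cast_pow]

lemma uniformProb_pi [Fintype ι] [DecidableEq ι] (P : ι → α → Prop) :
    uniformProb (fun x : ι → α ↦ ∀ i, P i (x i)) = ∏ i, uniformProb (P i) := by
  classical
  simp_rw [uniformProb_eq_expect_ite, ← expect_pi_prod, prod_boole, mem_univ, true_implies]

end UniformProb

section Orthogonality

open Finset Module
open scoped BigOperators

variable {F ι L : Type*} [Field F]

lemma exists_finset_coords_determine [Finite ι] (V : Submodule F (ι → F)) :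
    ∃ J : Finset ι, #J = finrank F V ∧ ∀ v ∈ V, (∀ j ∈ J, v j = 0) → v = 0 := by
  classical
  let coord : ι → Dual F V := fun j ↦ LinearMap.proj j ∘ₗ V.subtype
  obtain ⟨κ, a, ha, hspan, hli⟩ := exists_linearIndependent' F coord
  have : Fintype κ := @Fintype.ofFinite κ (.of_injective a ha)
  have determine : ∀ v : V, (∀ k, (v : ι → F) (a k) = 0) → v = 0 := by
    refine fun v hv ↦ Subtype.ext <| funext fun j ↦ ?_
    have hker : Submodule.span F (Set.range coord) ≤ LinearMap.ker (Dual.eval F V v) := by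
      rw [← hspan, Submodule.span_le]
      rintro _ ⟨k, rfl⟩
      exact hv k
    exact hker (Submodule.subset_span ⟨j, rfl⟩)
  refine ⟨univ.image a, ?_, fun v hv hJ ↦ ?_⟩
  · rw [card_image_of_injective _ ha, card_univ]
    refine le_antisymm ?_ ?_
    · simpa only [Subspace.dual_finrank_eq] using hli.fintype_card_le_finrank
    · let restrict : V →ₗ[F] κ → F := LinearMap.funLeft F F a ∘ₗ V.subtype
      have hinj : Function.Injective restrict :=
        (injective_iff_map_eq_zero restrict).2 fun v hv ↦ determine v (congrFun hv)
      simpa only [finrank_fintype_fun_eq_card] using LinearMap.finrank_le_finrank_of_injective hinj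
  · exact congrArg Subtype.val
      (determine ⟨v, hv⟩ fun k ↦ hJ _ (mem_image_of_mem a (mem_univ k)))

variable [Fintype ι] [DecidableEq ι] [Fintype L]

/-- Odlyzko's bound: the coordinates of a vector of `V` outside a determining set of coordinates are
forced, so each of them costs a factor `q`. -/
lemma uniformProb_comp_mem_le [Nonempty L] {φ : L → F} {q : ℝ}
    (hq : ∀ a, uniformProb (φ · = a) ≤ q) (V : Submodule F (ι → F)) :
    uniformProb (fun x : ι → L ↦ φ ∘ x ∈ V) ≤ q ^ (Fintype.card ι - finrank F V) := by
  obtain ⟨J, hJ, hV⟩ := exists_finset_coords_determine V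
  rw [← uniformProb_comp_equiv (Equiv.piEquivPiSubtypeProd (· ∉ J) fun _ ↦ L).symm]
  refine uniformProb_prod_le_of_forall_right fun y ↦ ?_
  set glue := fun x ↦ (Equiv.piEquivPiSubtypeProd (· ∉ J) fun _ ↦ L).symm (x, y) with hglue
  have glue_apply : ∀ x, ∀ j : {j // j ∉ J}, glue x j = x j := fun x j ↦ by
    simp [hglue, Equiv.piEquivPiSubtypeProd, j.2]
  obtain ⟨x₀, hx₀⟩ : ∃ x₀, ∀ x, φ ∘ glue x ∈ V → φ ∘ glue x₀ ∈ V :=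
    ⟨Classical.epsilon (φ ∘ glue · ∈ V), fun x hx ↦
      Classical.epsilon_spec (p := (φ ∘ glue · ∈ V)) ⟨x, hx⟩⟩
  calc uniformProb (fun x ↦ φ ∘ glue x ∈ V)
    _ ≤ uniformProb fun x : {j // j ∉ J} → L ↦ ∀ j, φ (x j) = φ (x₀ j) := by
      refine uniformProb_mono fun x hx j ↦ ?_
      have heq := hV _ (V.sub_mem hx (hx₀ x hx)) fun j hj ↦ by
        simp [hglue, Equiv.piEquivPiSubtypeProd, hj]
      simpa only [Pi.sub_apply, Function.comp_apply, glue_apply, Pi.zero_apply, sub_eq_zero]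
        using congrFun heq j
    _ = ∏ j : {j // j ∉ J}, uniformProb (φ · = φ (x₀ j)) := uniformProb_pi fun j l ↦ φ l = φ (x₀ j)
    _ ≤ ∏ _j : {j // j ∉ J}, q := prod_le_prod (fun _ _ ↦ uniformProb_nonneg _) fun _ _ ↦ hq _
    _ = q ^ (Fintype.card ι - finrank F V) := by
      rw [prod_const, card_univ, Fintype.card_subtype_compl, Fintype.card_coe, hJ]

lemma uniformProb_le_ker_le [Nonempty L] {φ : L → F} {q : ℝ}
    (hq : ∀ a, uniformProb (φ · = a) ≤ q) (W : Submodule F (ι → F)) :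
    uniformProb (fun x : ι → L ↦ W ≤ LinearMap.ker (dotProductEquiv F ι (φ ∘ x))) ≤
      q ^ finrank F W := by
  let V : Submodule F (ι → F) := W.dualAnnihilator.comap (dotProductEquiv F ι).toLinearMap
  have hV : Fintype.card ι - finrank F V = finrank F W := by
    have hVW : finrank F V = finrank F W.dualAnnihilator :=
      ((dotProductEquiv F ι).ofSubmodule' W.dualAnnihilator).finrank_eq
    have := Subspace.finrank_add_finrank_dualAnnihilator_eq W
    rw [finrank_fintype_fun_eq_card] at this
    lia
  rw [← hV]
  refine le_trans (uniformProb_mono fun x hx ↦ ?_) (uniformProb_comp_mem_le hq V)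
  exact (Submodule.mem_dualAnnihilator _).2 fun w hw ↦ hx hw

lemma card_inf_ker_mul_card {E : Type*} [AddCommGroup E] [Module F E] (W : Submodule F E)
    (f : E →ₗ[F] F) (h : ¬ W ≤ LinearMap.ker f) :
    Nat.card ↥(W ⊓ LinearMap.ker f) * Nat.card F = Nat.card W := by
  have hsurj : Function.Surjective (f ∘ₗ W.subtype) :=
    LinearMap.surjective fun h0 ↦ h fun w hw ↦ LinearMap.congr_fun h0 ⟨w, hw⟩
  have hker : Nat.card ↥(W ⊓ LinearMap.ker f) = Nat.card (LinearMap.ker (f ∘ₗ W.subtype)) := by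
    rw [LinearMap.ker_comp, ← Submodule.map_comap_subtype]
    exact Nat.card_congr (Submodule.equivMapOfInjective _ W.injective_subtype _).symm.toEquiv
  rw [hker, ← Nat.card_congr ((f ∘ₗ W.subtype).quotKerEquivOfSurjective hsurj).toEquiv,
    ← Submodule.card_eq_card_quotient_mul_card]

/-- The probability that a random vector, with independent coordinates distributed as `φ` of a
uniform label, is orthogonal to `v`. -/
noncomputable def orthProb (φ : L → F) (v : ι → F) : ℝ :=
  uniformProb fun x : ι → L ↦ φ ∘ x ⬝ᵥ v = 0

lemma orthProb_nonneg (φ : L → F) (v : ι → F) : 0 ≤ orthProb φ v :=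
  uniformProb_nonneg _

lemma orthProb_le_one [Nonempty L] (φ : L → F) (v : ι → F) : orthProb φ v ≤ 1 :=
  uniformProb_le_one _

variable [Fintype F]

lemma expect_card_inf_ker_le [Nonempty L] {φ : L → F} {q : ℝ}
    (hq : ∀ a, uniformProb (φ · = a) ≤ q) (W : Submodule F (ι → F)) :
    𝔼 x : ι → L, (Nat.card ↥(W ⊓ LinearMap.ker (dotProductEquiv F ι (φ ∘ x))) : ℝ) ≤
      (1 / Fintype.card F + q ^ finrank F W) * Nat.card W := by
  classical
  have hker : ∀ f : (ι → F) →ₗ[F] F, (Nat.card ↥(W ⊓ LinearMap.ker f) : ℝ) ≤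
      (1 / Fintype.card F + if W ≤ LinearMap.ker f then 1 else 0) * Nat.card W := by
    intro f
    split_ifs with h
    · rw [inf_eq_left.2 h]
      exact le_mul_of_one_le_left (by positivity) (le_add_of_nonneg_left (by positivity))
    · rw [← card_inf_ker_mul_card W f h, Nat.card_eq_fintype_card (α := F)]
      push_cast
      field_simp
      simp
  calc 𝔼 x : ι → L, (Nat.card ↥(W ⊓ LinearMap.ker (dotProductEquiv F ι (φ ∘ x))) : ℝ)
    _ ≤ 𝔼 x : ι → L, (1 / Fintype.card F +
        if W ≤ LinearMap.ker (dotProductEquiv F ι (φ ∘ x)) then 1 else 0) * (Nat.card W : ℝ) :=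
      expect_le_expect fun x _ ↦ hker _
    _ = (1 / Fintype.card F +
        uniformProb fun x : ι → L ↦ W ≤ LinearMap.ker (dotProductEquiv F ι (φ ∘ x))) *
          Nat.card W := by
      rw [← expect_mul, expect_add_distrib, Fintype.expect_const, uniformProb_eq_expect_ite]
    _ ≤ (1 / Fintype.card F + q ^ finrank F W) * Nat.card W := by
      gcongr
      exact uniformProb_le_ker_le hq W

open Classical in
lemma sum_orthProb_pow_succ (φ : L → F) (m : ℕ) (W : Submodule F (ι → F)) :
    ∑ v with v ∈ W, orthProb φ v ^ (m + 1) =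
      𝔼 x : ι → L, ∑ v with v ∈ W ⊓ LinearMap.ker (dotProductEquiv F ι (φ ∘ x)),
        orthProb φ v ^ m := by
  have hsum : ∀ x : ι → L, ∑ v with v ∈ W ⊓ LinearMap.ker (dotProductEquiv F ι (φ ∘ x)),
      orthProb φ v ^ m = ∑ v with v ∈ W, orthProb φ v ^ m * if φ ∘ x ⬝ᵥ v = 0 then 1 else 0 := by
    intro x
    simp only [mul_ite, mul_one, mul_zero, ← sum_filter, filter_filter, Submodule.mem_inf,
      LinearMap.mem_ker, dotProductEquiv_apply_apply]
  simp_rw [hsum, expect_sum_comm, ← mul_expect, pow_succ, orthProb, uniformProb_eq_expect_ite]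

open Classical in
lemma sum_orthProb_pow_le_natCard [Nonempty L] (φ : L → F) (m : ℕ) (W : Submodule F (ι → F)) :
    ∑ v with v ∈ W, orthProb φ v ^ m ≤ Nat.card W :=
  calc ∑ v with v ∈ W, orthProb φ v ^ m
    _ ≤ ∑ v with v ∈ W, (1 : ℝ) :=
      sum_le_sum fun v _ ↦ pow_le_one₀ (orthProb_nonneg _ _) (orthProb_le_one _ _)
    _ = Nat.card W := by simp [Nat.card_eq_fintype_card, Fintype.card_subtype]

open Classical in
lemma sum_orthProb_pow_le [Nonempty L] {φ : L → F} {q : ℝ} (hq : ∀ a, uniformProb (φ · = a) ≤ q)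
    (hq₁ : q ≤ 1) (d m : ℕ) (W : Submodule F (ι → F)) :
    ∑ v with v ∈ W, orthProb φ v ^ m ≤
      (1 / Fintype.card F + q ^ d) ^ m * Nat.card W + Fintype.card F ^ d := by
  have hq₀ : 0 ≤ q := (uniformProb_nonneg _).trans (hq 0)
  set a : ℝ := 1 / Fintype.card F + q ^ d
  induction m generalizing W with
  | zero =>
    rw [pow_zero, one_mul]
    exact (sum_orthProb_pow_le_natCard φ 0 W).trans (le_add_of_nonneg_right (by positivity))
  | succ m ih =>
    obtain hd | hd := lt_or_ge (finrank F W) d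
    · refine (sum_orthProb_pow_le_natCard φ (m + 1) W).trans (le_add_of_nonneg_of_le ?_ ?_)
      · positivity
      · rw [Nat.card_eq_fintype_card, card_eq_pow_finrank (K := F), Nat.cast_pow]
        exact pow_le_pow_right₀ (mod_cast Fintype.card_pos) hd.le
    · calc ∑ v with v ∈ W, orthProb φ v ^ (m + 1)
        _ = 𝔼 x : ι → L, ∑ v with v ∈ W ⊓ LinearMap.ker (dotProductEquiv F ι (φ ∘ x)),
            orthProb φ v ^ m := sum_orthProb_pow_succ φ m W
        _ ≤ 𝔼 x : ι → L, (a ^ m * Nat.card ↥(W ⊓ LinearMap.ker (dotProductEquiv F ι (φ ∘ x))) +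
            (Fintype.card F : ℝ) ^ d) := expect_le_expect fun x _ ↦ ih _
        _ = a ^ m * 𝔼 x : ι → L, (Nat.card ↥(W ⊓ LinearMap.ker (dotProductEquiv F ι (φ ∘ x))) : ℝ) +
            (Fintype.card F : ℝ) ^ d := by
          rw [expect_add_distrib, Fintype.expect_const, mul_expect]
        _ ≤ a ^ m * ((1 / Fintype.card F + q ^ finrank F W) * Nat.card W) +
            (Fintype.card F : ℝ) ^ d := by
          gcongr
          exact expect_card_inf_ker_le hq W
        _ ≤ a ^ m * (a * Nat.card W) + (Fintype.card F : ℝ) ^ d := by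
          gcongr
          exact add_le_add_right (pow_le_pow_of_le_one hq₀ hq₁ hd) _
        _ = a ^ (m + 1) * Nat.card W + (Fintype.card F : ℝ) ^ d := by rw [pow_succ, mul_assoc]

end Orthogonality

section Labels

open Finset
open scoped BigOperators

/-- The inclusion of the signs `±1`, encoded as `ℤˣ`, into a ring. -/
def signCast (R : Type*) [Ring R] : ℤˣ →* R :=
  (Int.castRingHom R : ℤ →* R).comp (Units.coeHom ℤ)

/-- A label whose uniform distribution takes the values `±2` with probability `1/64` each, and `0`
otherwise. Orthogonality probabilities for lazy labels dominate those for signs but decay faster in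
high codimension. -/
def lazyLabel (R : Type*) [Ring R] (l : ℤˣ × Fin 32) : R :=
  if l.2 = 0 then 2 * signCast R l.1 else 0

variable {R K : Type*} [Ring R] [Field K] [CharZero K]

lemma expect_signCast (g : R → K) : 𝔼 u, g (signCast R u) = (g 1 + g (-1)) / 2 := by
  have huniv : (univ : Finset ℤˣ) = {1, -1} := rfl
  rw [Fintype.expect_eq_sum_div_card, huniv, sum_pair (by decide)]
  simp [signCast]

lemma expect_lazyLabel (g : R → K) :
    𝔼 l, g (lazyLabel R l) = (g 2 + g (-2) + 62 * g 0) / 64 := by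
  have hsucc : ∀ (u : ℤˣ) (k : Fin 31), lazyLabel R (u, k.succ) = 0 := fun u k ↦
    if_neg k.succ_ne_zero
  have hzero : ∀ u : ℤˣ, lazyLabel R (u, 0) = 2 * signCast R u := fun u ↦ if_pos rfl
  have hfiber : ∀ u, 𝔼 k, g (lazyLabel R (u, k)) = (g (2 * signCast R u) + 31 * g 0) / 32 := by
    intro u
    rw [Fintype.expect_eq_sum_div_card, Fin.sum_univ_succ]
    simp only [hsucc, hzero, sum_const, card_univ, Fintype.card_fin, nsmul_eq_mul, Nat.cast_ofNat]
  rw [← univ_product_univ, expect_product, expect_congr rfl fun u _ ↦ hfiber u,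
    expect_signCast fun s ↦ (g (2 * s) + 31 * g 0) / 32, mul_one, mul_neg_one]
  ring

lemma uniformProb_signCast_eq_le (h2 : (2 : R) ≠ 0) (a : R) :
    uniformProb (signCast R · = a) ≤ 1 / 2 := by
  classical
  have hne : (1 : R) ≠ -1 := fun h ↦ h2 <| by
    rwa [← one_add_one_eq_two, ← eq_neg_iff_add_eq_zero]
  rw [uniformProb_eq_expect_ite, expect_signCast fun b ↦ if b = a then (1 : ℝ) else 0]
  split_ifs with h h' <;> first | exact absurd (h.trans h'.symm) hne | norm_num

lemma uniformProb_lazyLabel_eq_le (h2 : (2 : R) ≠ 0) (a : R) :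
    uniformProb (lazyLabel R · = a) ≤ 31 / 32 := by
  classical
  rw [uniformProb_eq_expect_ite, expect_lazyLabel fun b ↦ if b = a then (1 : ℝ) else 0]
  obtain rfl | ha := eq_or_ne 0 a
  · norm_num [h2]
  · simp only [if_neg ha]
    split_ifs <;> norm_num

end Labels

section Fourier

open Finset
open scoped BigOperators

variable {F ι L : Type*} [Field F]

lemma addChar_map_sum {A M : Type*} [AddCommMonoid A] [CommMonoid M] (ψ : AddChar A M)
    (s : Finset ι) (f : ι → A) : ψ (∑ i ∈ s, f i) = ∏ i ∈ s, ψ (f i) :=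
  map_prod ψ.toMonoidHom (fun i ↦ Multiplicative.ofAdd (f i)) s

section Energy

variable [Finite F] (ψ : AddChar F ℂ)

lemma addChar_re_sq_add_im_sq (a : F) : (ψ a).re ^ 2 + (ψ a).im ^ 2 = 1 := by
  have := Complex.sq_norm (ψ a)
  rw [AddChar.norm_apply, Complex.normSq_apply] at this
  linarith

lemma addChar_im_sq (a : F) : (ψ a).im ^ 2 = (1 - (ψ (2 * a)).re) / 2 := by
  rw [two_mul, AddChar.map_add_eq_mul, Complex.mul_re]
  linarith [addChar_re_sq_add_im_sq ψ a]

lemma addChar_im_add_sq_le (a b : F) :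
    (ψ (a + b)).im ^ 2 ≤ 2 * ((ψ a).im ^ 2 + (ψ b).im ^ 2) := by
  have ha := addChar_re_sq_add_im_sq ψ a
  have hb := addChar_re_sq_add_im_sq ψ b
  calc (ψ (a + b)).im ^ 2
    _ ≤ 2 * (((ψ a).re * (ψ b).im) ^ 2 + ((ψ a).im * (ψ b).re) ^ 2) := by
      rw [AddChar.map_add_eq_mul, Complex.mul_im]
      exact add_sq_le
    _ ≤ 2 * ((ψ a).im ^ 2 + (ψ b).im ^ 2) := by
      simp only [mul_pow]
      nlinarith [sq_nonneg (ψ a).im, sq_nonneg (ψ b).im, sq_nonneg (ψ a).re]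

end Energy

variable [Fintype ι] {ψ : AddChar F ℂ}

/-- How far the frequency `ξ` is from annihilating `v`: the Fourier transform at `ξ` of the random
walk with steps `±v j` decays exponentially in this quantity. -/
noncomputable def charEnergy (ψ : AddChar F ℂ) (v : ι → F) (ξ : F) : ℝ :=
  ∑ j, (ψ (ξ * v j)).im ^ 2

lemma charEnergy_nonneg (v : ι → F) (ξ : F) : 0 ≤ charEnergy ψ v ξ :=
  sum_nonneg fun _ _ ↦ sq_nonneg _

lemma charEnergy_add_le [Finite F] (v : ι → F) (ξ η : F) :
    charEnergy ψ v (ξ + η) ≤ 2 * (charEnergy ψ v ξ + charEnergy ψ v η) := by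
  simp_rw [charEnergy, ← sum_add_distrib, mul_sum, add_mul]
  exact sum_le_sum fun j _ ↦ addChar_im_add_sq_le ψ _ _

lemma exp_neg_charEnergy_div (v : ι → F) (ξ : F) (c : ℝ) :
    Real.exp (-charEnergy ψ v ξ / c) = ∏ j, Real.exp (-(ψ (ξ * v j)).im ^ 2 / c) := by
  rw [← Real.exp_sum, ← sum_div, sum_neg_distrib, charEnergy]

variable [Fintype F] [Fintype L]

lemma expect_addChar_mul [DecidableEq F] (hψ : ψ.IsPrimitive) (b : F) :
    𝔼 ξ, ψ (ξ * b) = if b = 0 then 1 else 0 := by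
  rw [Fintype.expect_eq_sum_div_card, AddChar.sum_mulShift b hψ]
  split_ifs <;> simp

lemma orthProb_eq_expect_prod [DecidableEq ι] (hψ : ψ.IsPrimitive) (φ : L → F) (v : ι → F) :
    (orthProb φ v : ℂ) = 𝔼 ξ, ∏ j, 𝔼 l, ψ (φ l * (ξ * v j)) := by
  classical
  calc (orthProb φ v : ℂ)
    _ = 𝔼 x : ι → L, 𝔼 ξ, ψ (ξ * (φ ∘ x ⬝ᵥ v)) := by
      simp_rw [orthProb, uniformProb_eq_expect_ite, expect_addChar_mul hψ, Complex.ofReal_expect,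
        apply_ite Complex.ofReal, Complex.ofReal_one, Complex.ofReal_zero]
    _ = 𝔼 ξ, 𝔼 x : ι → L, ∏ j, ψ (φ (x j) * (ξ * v j)) := by
      rw [expect_comm]
      simp_rw [dotProduct, mul_sum, addChar_map_sum, Function.comp_apply, mul_left_comm]
    _ = 𝔼 ξ, ∏ j, 𝔼 l, ψ (φ l * (ξ * v j)) :=
      expect_congr rfl fun ξ _ ↦ expect_pi_prod fun j l ↦ ψ (φ l * (ξ * v j))

lemma expect_charEnergy [DecidableEq F] (hψ : ψ.IsPrimitive) (h2 : (2 : F) ≠ 0) (v : ι → F) :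
    𝔼 ξ, charEnergy ψ v ξ = hammingNorm v / 2 := by
  have hcoord : ∀ a : F, 𝔼 ξ, (ψ (ξ * a)).im ^ 2 = if a ≠ 0 then 1 / 2 else 0 := fun a ↦ by
    calc 𝔼 ξ, (ψ (ξ * a)).im ^ 2
      _ = (1 - (𝔼 ξ, ψ (ξ * (2 * a))).re) / 2 := by
        simp_rw [addChar_im_sq, mul_left_comm (2 : F), ← expect_div, expect_sub_distrib,
          Fintype.expect_const, Complex.re_expect]
      _ = if a ≠ 0 then 1 / 2 else 0 := by
        rw [expect_addChar_mul hψ]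
        by_cases ha : a = 0 <;> simp [ha, h2]
  simp_rw [charEnergy, expect_sum_comm, hcoord, ← sum_filter, sum_const, hammingNorm, nsmul_eq_mul]
  ring

lemma orthProb_signCast_le [DecidableEq ι] (hψ : ψ.IsPrimitive) (v : ι → F) :
    orthProb (signCast F) v ≤ 𝔼 ξ, Real.exp (-charEnergy ψ v ξ / 2) := by
  have hfactor : ∀ a : F, 𝔼 u, ψ (signCast F u * a) = (ψ a).re := fun a ↦ by
    rw [expect_signCast fun s ↦ ψ (s * a), one_mul, neg_one_mul, AddChar.map_neg_eq_conj,
      Complex.add_conj]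
    push_cast
    ring
  have hcos : ∀ a : F, |(ψ a).re| ≤ Real.exp (-(ψ a).im ^ 2 / 2) := fun a ↦ by
    refine abs_le_of_sq_le_sq ?_ (Real.exp_pos _).le
    calc (ψ a).re ^ 2 = -(ψ a).im ^ 2 + 1 := by linarith [addChar_re_sq_add_im_sq ψ a]
      _ ≤ Real.exp (-(ψ a).im ^ 2) := Real.add_one_le_exp _
      _ = Real.exp (-(ψ a).im ^ 2 / 2) ^ 2 := by rw [← Real.exp_nat_mul]; ring_nf
  have hprod : orthProb (signCast F) v = 𝔼 ξ, ∏ j, (ψ (ξ * v j)).re := by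
    apply Complex.ofReal_injective
    simp_rw [orthProb_eq_expect_prod hψ, hfactor, Complex.ofReal_expect,
      Complex.ofReal_prod]
  rw [hprod]
  refine expect_le_expect fun ξ _ ↦ (le_abs_self _).trans ?_
  rw [abs_prod, exp_neg_charEnergy_div]
  exact prod_le_prod (fun _ _ ↦ abs_nonneg _) fun j _ ↦ hcos _

lemma exp_neg_div_eight_le {t : ℝ} (h0 : 0 ≤ t) (h1 : t ≤ 1) :
    Real.exp (-t / 8) ≤ 1 - t / 16 := by
  have hexp : t / 8 + 1 ≤ Real.exp (t / 8) := Real.add_one_le_exp _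
  rw [neg_div, Real.exp_neg]
  calc (Real.exp (t / 8))⁻¹ ≤ (t / 8 + 1)⁻¹ := by gcongr
    _ ≤ 1 - t / 16 := by rw [inv_le_iff_one_le_mul₀ (by positivity)]; nlinarith

lemma le_orthProb_lazyLabel [DecidableEq ι] (hψ : ψ.IsPrimitive) (v : ι → F) :
    𝔼 ξ, Real.exp (-charEnergy ψ v ξ / 8) ≤ orthProb (lazyLabel F) v := by
  have hfactor : ∀ a : F, 𝔼 l, ψ (lazyLabel F l * a) = (1 - (ψ a).im ^ 2 / 16 : ℝ) := fun a ↦ by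
    rw [expect_lazyLabel fun s ↦ ψ (s * a), neg_mul, AddChar.map_neg_eq_conj, Complex.add_conj,
      addChar_im_sq]
    push_cast
    simp
    ring
  have hprod : orthProb (lazyLabel F) v = 𝔼 ξ, ∏ j, (1 - (ψ (ξ * v j)).im ^ 2 / 16) := by
    apply Complex.ofReal_injective
    simp_rw [orthProb_eq_expect_prod hψ, hfactor, Complex.ofReal_expect,
      Complex.ofReal_prod]
  rw [hprod]
  refine expect_le_expect fun ξ _ ↦ ?_
  rw [exp_neg_charEnergy_div]
  refine prod_le_prod (fun _ _ ↦ (Real.exp_pos _).le) fun j _ ↦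
    exp_neg_div_eight_le (sq_nonneg _) ?_
  linarith [addChar_re_sq_add_im_sq ψ (ξ * v j), sq_nonneg (ψ (ξ * v j)).re]

end Fourier

section LayerCake

open Finset MeasureTheory ProbabilityTheory
open scoped BigOperators Pointwise

lemma expMeasure_real_Ioi {r c : ℝ} (hr : 0 < r) (hc : 0 ≤ c) :
    (expMeasure r).real (Set.Ioi c) = Real.exp (-(r * c)) := by
  have := isProbabilityMeasure_expMeasure hr
  rw [← Set.compl_Iic, probReal_compl_eq_one_sub measurableSet_Iic, ← cdf_eq_real,
    cdf_expMeasure_eq hr, if_pos hc, sub_sub_cancel]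

section Integral

variable {α : Type*} [Fintype α] (μ : Measure ℝ) [IsFiniteMeasure μ] (X : α → ℝ)

lemma uniformProb_lt_eq_expect_indicator (u : ℝ) :
    uniformProb (X · < u) = (∑ x, (Set.Ioi (X x)).indicator 1 u) / Fintype.card α := by
  rw [uniformProb, Fintype.expect_eq_sum_div_card]
  rfl

lemma integrable_uniformProb_lt : Integrable (fun u ↦ uniformProb (X · < u)) μ := by
  simp_rw [uniformProb_lt_eq_expect_indicator]
  exact (integrable_finsetSum _ fun x _ ↦
    (integrable_const (1 : ℝ)).indicator measurableSet_Ioi).div_const _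

lemma integral_uniformProb_lt :
    ∫ u, uniformProb (X · < u) ∂μ = 𝔼 x, μ.real (Set.Ioi (X x)) := by
  simp_rw [uniformProb_lt_eq_expect_indicator]
  rw [integral_div, integral_finsetSum, Fintype.expect_eq_sum_div_card]
  · simp_rw [integral_indicator_one measurableSet_Ioi]
  · exact fun x _ ↦ (integrable_const (1 : ℝ)).indicator measurableSet_Ioi

end Integral

variable {p : ℕ} [Fact p.Prime] {S : ZMod p → ℝ}

/-- Doubling a sublevel set quadruples the level, so Cauchy–Davenport applies until the level
reaches the mean. -/
lemma two_mul_uniformProb_lt_le (hadd : ∀ ξ η, S (ξ + η) ≤ 2 * (S ξ + S η)) {u : ℝ}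
    (hu : u ≤ (𝔼 ξ, S ξ) / 4) :
    2 * uniformProb (S · < u) ≤ uniformProb (S · / 4 < u) + 1 / p := by
  have hp : p.Prime := Fact.out
  have hcard : ∀ a : ℝ, uniformProb (S · < a) = #{ξ | S ξ < a} / p := fun a ↦ by
    rw [uniformProb_eq_expect_ite, Fintype.expect_eq_sum_div_card, sum_boole, ZMod.card]
  simp_rw [div_lt_iff₀' (four_pos : (0 : ℝ) < 4), hcard]
  set T : Finset (ZMod p) := {ξ | S ξ < u} with hT
  set T' : Finset (ZMod p) := {ξ | S ξ < 4 * u} with hT'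
  suffices 2 * #T ≤ #T' + 1 by
    rw [← add_div, mul_div_assoc']
    gcongr
    exact_mod_cast this
  obtain hE | hE := T.eq_empty_or_nonempty
  · simp [hE]
  have hsub : T + T ⊆ T' := fun ζ hζ ↦ by
    obtain ⟨ξ, hξ, η, hη, rfl⟩ := mem_add.1 hζ
    rw [hT, mem_filter_univ] at hξ hη
    rw [hT', mem_filter_univ]
    linarith [hadd ξ η]
  have hlt : #T' < p := by
    obtain ⟨ξ, -, hξ⟩ := exists_le_of_le_expect univ_nonempty (show 4 * u ≤ 𝔼 ξ, S ξ by linarith)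
    have hξ' : ξ ∉ T' := by rwa [hT', mem_filter_univ, not_lt]
    simpa only [ZMod.card] using card_lt_univ_of_notMem hξ'
  have := (ZMod.cauchy_davenport hp hE hE).trans (card_le_card hsub)
  lia

lemma two_mul_uniformProb_lt_le_add_indicator (hadd : ∀ ξ η, S (ξ + η) ≤ 2 * (S ξ + S η)) (u : ℝ) :
    2 * uniformProb (S · < u) ≤ uniformProb (S · / 4 < u) +
      (1 / p + 2 * (Set.Ioi ((𝔼 ξ, S ξ) / 4)).indicator 1 u) := by
  obtain hu | hu := le_or_gt u ((𝔼 ξ, S ξ) / 4)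
  · simpa [hu] using two_mul_uniformProb_lt_le hadd hu
  · have : 0 ≤ uniformProb (S · / 4 < u) := uniformProb_nonneg _
    calc 2 * uniformProb (S · < u) ≤ 2 * 1 := by gcongr; exact uniformProb_le_one _
      _ ≤ uniformProb (S · / 4 < u) + (1 / p + 2 * 1) := by
        linarith [show 0 ≤ 1 / (p : ℝ) by positivity]
      _ = _ := by simp [hu]

lemma two_mul_expect_exp_le (h0 : ∀ ξ, 0 ≤ S ξ) (hadd : ∀ ξ η, S (ξ + η) ≤ 2 * (S ξ + S η)) :
    2 * 𝔼 ξ, Real.exp (-S ξ / 2) ≤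
      𝔼 ξ, Real.exp (-S ξ / 8) + 1 / p + 2 * Real.exp (-(𝔼 ξ, S ξ) / 8) := by
  set k := 𝔼 ξ, S ξ
  have hk : 0 ≤ k := expect_nonneg fun ξ _ ↦ h0 ξ
  let μ : Measure ℝ := expMeasure (1 / 2)
  have : IsProbabilityMeasure μ := isProbabilityMeasure_expMeasure one_half_pos
  have hμ : ∀ {c : ℝ}, 0 ≤ c → μ.real (Set.Ioi c) = Real.exp (-c / 2) := fun hc ↦ by
    rw [expMeasure_real_Ioi one_half_pos hc]
    ring_nf
  have hind : Integrable ((Set.Ioi (k / 4)).indicator (1 : ℝ → ℝ)) μ :=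
    (integrable_const 1).indicator measurableSet_Ioi
  have hrest := (integrable_const (1 / (p : ℝ))).add (hind.const_mul 2)
  calc 2 * 𝔼 ξ, Real.exp (-S ξ / 2)
    _ = ∫ u, 2 * uniformProb (S · < u) ∂μ := by
      rw [integral_const_mul, integral_uniformProb_lt]
      simp_rw [hμ (h0 _)]
    _ ≤ ∫ u, (uniformProb (S · / 4 < u) + (1 / p + 2 * (Set.Ioi (k / 4)).indicator 1 u)) ∂μ :=
      integral_mono ((integrable_uniformProb_lt μ S).const_mul 2)
        ((integrable_uniformProb_lt μ _).add hrest)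
        (two_mul_uniformProb_lt_le_add_indicator hadd)
    _ = ∫ u, uniformProb (S · / 4 < u) ∂μ +
        (∫ _, (1 / p : ℝ) ∂μ + ∫ u, 2 * (Set.Ioi (k / 4)).indicator 1 u ∂μ) := by
      rw [← integral_add (integrable_const _) (hind.const_mul 2)]
      exact integral_add (integrable_uniformProb_lt μ _) hrest
    _ = 𝔼 ξ, Real.exp (-(S ξ / 4) / 2) + (1 / p + 2 * Real.exp (-(k / 4) / 2)) := by
      rw [integral_uniformProb_lt, integral_const_mul, integral_indicator_one measurableSet_Ioi,
        integral_const, probReal_univ, one_smul, hμ (by positivity)]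
      simp_rw [hμ (div_nonneg (h0 _) zero_le_four)]
    _ = 𝔼 ξ, Real.exp (-S ξ / 8) + 1 / p + 2 * Real.exp (-k / 8) := by
      rw [add_assoc]
      ring_nf

end LayerCake

section Comparison

open Finset
open scoped BigOperators

lemma two_mul_orthProb_signCast_le {p : ℕ} [Fact p.Prime] (h2 : (2 : ZMod p) ≠ 0)
    {ι : Type*} [Fintype ι] [DecidableEq ι] (v : ι → ZMod p) :
    2 * orthProb (signCast (ZMod p)) v ≤
      orthProb (lazyLabel (ZMod p)) v + 1 / p + 2 * Real.exp (-hammingNorm v / 16) := by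
  have hψ := ZMod.isPrimitive_stdAddChar p
  have hmean : -(𝔼 ξ, charEnergy ZMod.stdAddChar v ξ) / 8 = -hammingNorm v / 16 := by
    rw [expect_charEnergy hψ h2]
    ring
  calc 2 * orthProb (signCast (ZMod p)) v
    _ ≤ 2 * 𝔼 ξ, Real.exp (-charEnergy ZMod.stdAddChar v ξ / 2) := by
      gcongr
      exact orthProb_signCast_le hψ v
    _ ≤ 𝔼 ξ, Real.exp (-charEnergy ZMod.stdAddChar v ξ / 8) + 1 / p +
        2 * Real.exp (-hammingNorm v / 16) :=
      hmean ▸ two_mul_expect_exp_le (charEnergy_nonneg v) (charEnergy_add_le v)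
    _ ≤ orthProb (lazyLabel (ZMod p)) v + 1 / p + 2 * Real.exp (-hammingNorm v / 16) := by
      gcongr
      exact le_orthProb_lazyLabel hψ v

end Comparison

section RichVectors

open Finset
open scoped BigOperators

section HammingNorm

variable {ι F : Type*} [Fintype ι] [DecidableEq ι] [Zero F] [DecidableEq F]

lemma hammingNorm_update_zero_lt {v : ι → F} {i : ι} (hi : v i ≠ 0) :
    hammingNorm (Function.update v i 0) < hammingNorm v := by
  refine card_lt_card ((ssubset_iff_of_subset fun j ↦ ?_).2 ⟨i, by simpa using hi, by simp⟩)
  by_cases hj : j = i <;> simp [hj]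

lemma card_hammingNorm_le_le [Fintype F] [Nonempty ι] (s : ℕ) :
    #{v : ι → F | hammingNorm v ≤ s} ≤ (Fintype.card ι * Fintype.card F) ^ s := by
  induction s with
  | zero => simp [filter_eq']
  | succ s ih =>
    calc #{v : ι → F | hammingNorm v ≤ s + 1}
      _ ≤ #((({v | hammingNorm v ≤ s} : Finset (ι → F)) ×ˢ univ).image
          fun x : (ι → F) × ι × F ↦ Function.update x.1 x.2.1 x.2.2) := by
        refine card_le_card fun v hv ↦ mem_image.2 ?_
        rw [mem_filter_univ] at hv
        obtain hle | hlt := le_or_gt (hammingNorm v) s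
        · let i := Classical.arbitrary ι
          exact ⟨(v, i, v i), by simpa using hle, by simp⟩
        · obtain ⟨i, hi⟩ := Function.ne_iff.1 (hammingNorm_ne_zero_iff.1 (pos_of_gt hlt).ne')
          have := hammingNorm_update_zero_lt hi
          exact ⟨(Function.update v i 0, i, v i), by simp; lia, by simp⟩
      _ ≤ #({v | hammingNorm v ≤ s} : Finset (ι → F)) * (Fintype.card ι * Fintype.card F) := by
        refine card_image_le.trans ?_
        rw [card_product, card_univ, Fintype.card_prod]
      _ ≤ (Fintype.card ι * Fintype.card F) ^ (s + 1) := by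
        rw [pow_succ]
        gcongr

end HammingNorm

lemma orthProb_le_of_ne_zero {F ι L : Type*} [Field F] [Fintype ι] [DecidableEq ι] [Fintype L]
    [Nonempty L] {φ : L → F} {q : ℝ} (hq : ∀ a, uniformProb (φ · = a) ≤ q) {v : ι → F}
    (hv : v ≠ 0) : orthProb φ v ≤ q := by
  have hle := uniformProb_le_ker_le hq (Submodule.span F {v})
  rw [finrank_span_singleton hv, pow_one] at hle
  refine (uniformProb_mono fun x hx ↦ ?_).trans hle
  rwa [Submodule.span_singleton_le_iff_mem]

variable {p : ℕ} [Fact p.Prime] {ι : Type*} [Fintype ι] [DecidableEq ι] {s : ℕ}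

lemma orthProb_signCast_le_two_thirds_mul (h2 : (2 : ZMod p) ≠ 0)
    (hs : p * Real.exp (-s / 16) ≤ 1 / 2) {v : ι → ZMod p} (hv : s ≤ hammingNorm v)
    (hrich : 4 / p < orthProb (signCast (ZMod p)) v) :
    orthProb (signCast (ZMod p)) v ≤ 2 / 3 * orthProb (lazyLabel (ZMod p)) v := by
  have hp : (0 : ℝ) < p := mod_cast (Fact.out : p.Prime).pos
  have hexp : Real.exp (-hammingNorm v / 16) ≤ 1 / 2 / p := by
    rw [le_div_iff₀' hp]
    refine le_trans ?_ hs
    gcongr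
  have := two_mul_orthProb_signCast_le h2 v
  have : 4 / (p : ℝ) = 4 * (1 / p) := by ring
  have : 1 / 2 / (p : ℝ) = 1 / 2 * (1 / p) := by ring
  linarith

lemma sum_sparse_orthProb_pow_le [Nonempty ι] (h2 : (2 : ZMod p) ≠ 0) (s m : ℕ) :
    ∑ v : ι → ZMod p with v ≠ 0 ∧ hammingNorm v ≤ s, orthProb (signCast (ZMod p)) v ^ m ≤
      (1 / 2) ^ m * (Fintype.card ι * p) ^ s := by
  calc ∑ v : ι → ZMod p with v ≠ 0 ∧ hammingNorm v ≤ s, orthProb (signCast (ZMod p)) v ^ m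
    _ ≤ ∑ v : ι → ZMod p with v ≠ 0 ∧ hammingNorm v ≤ s, (1 / 2 : ℝ) ^ m := by
      refine sum_le_sum fun v hv ↦ pow_le_pow_left₀ (orthProb_nonneg _ _) ?_ _
      exact orthProb_le_of_ne_zero (uniformProb_signCast_eq_le h2) ((mem_filter_univ _).1 hv).1
    _ ≤ ∑ v : ι → ZMod p with hammingNorm v ≤ s, (1 / 2 : ℝ) ^ m :=
      sum_le_sum_of_subset_of_nonneg (monotone_filter_right _ fun _ _ h ↦ h.2)
        fun _ _ _ ↦ by positivity
    _ ≤ (1 / 2) ^ m * (Fintype.card ι * p) ^ s := by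
      have hcard := card_hammingNorm_le_le (ι := ι) (F := ZMod p) s
      rw [ZMod.card] at hcard
      rw [sum_const, nsmul_eq_mul, mul_comm]
      gcongr
      exact_mod_cast hcard

lemma sum_dense_orthProb_pow_le (h2 : (2 : ZMod p) ≠ 0)
    (hs : p * Real.exp (-s / 16) ≤ 1 / 2) (m : ℕ) :
    ∑ v : ι → ZMod p with s ≤ hammingNorm v ∧ 4 / p < orthProb (signCast (ZMod p)) v,
        orthProb (signCast (ZMod p)) v ^ m ≤
      (2 / 3) ^ m * ((1 / p + (31 / 32) ^ s) ^ m * p ^ Fintype.card ι + p ^ s) := by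
  classical
  calc ∑ v : ι → ZMod p with s ≤ hammingNorm v ∧ 4 / p < orthProb (signCast (ZMod p)) v,
        orthProb (signCast (ZMod p)) v ^ m
    _ ≤ ∑ v : ι → ZMod p with s ≤ hammingNorm v ∧ 4 / p < orthProb (signCast (ZMod p)) v,
        (2 / 3) ^ m * orthProb (lazyLabel (ZMod p)) v ^ m := by
      refine sum_le_sum fun v hv ↦ ?_
      rw [mem_filter_univ] at hv
      rw [← mul_pow]
      exact pow_le_pow_left₀ (orthProb_nonneg _ _)
        (orthProb_signCast_le_two_thirds_mul h2 hs hv.1 hv.2) _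
    _ ≤ ∑ v : ι → ZMod p with v ∈ (⊤ : Submodule (ZMod p) (ι → ZMod p)),
        (2 / 3) ^ m * orthProb (lazyLabel (ZMod p)) v ^ m :=
      sum_le_sum_of_subset_of_nonneg (monotone_filter_right _ fun _ _ _ ↦ trivial)
        fun _ _ _ ↦ mul_nonneg (by positivity) (pow_nonneg (orthProb_nonneg _ _) _)
    _ ≤ (2 / 3) ^ m * ((1 / p + (31 / 32) ^ s) ^ m * p ^ Fintype.card ι + p ^ s) := by
      rw [← mul_sum]
      gcongr
      simpa [Nat.card_eq_fintype_card] using sum_orthProb_pow_le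
        (uniformProb_lazyLabel_eq_le h2) (by norm_num) s m (⊤ : Submodule (ZMod p) (ι → ZMod p))

lemma sum_rich_orthProb_pow_le [Nonempty ι] (h2 : (2 : ZMod p) ≠ 0)
    (hs : p * Real.exp (-s / 16) ≤ 1 / 2) (m : ℕ) :
    ∑ v : ι → ZMod p with v ≠ 0 ∧ 4 / p < orthProb (signCast (ZMod p)) v,
        orthProb (signCast (ZMod p)) v ^ m ≤
      (1 / 2) ^ m * (Fintype.card ι * p) ^ s +
        (2 / 3) ^ m * ((1 / p + (31 / 32) ^ s) ^ m * p ^ Fintype.card ι + p ^ s) := by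
  rw [← sum_filter_add_sum_filter_not _ (hammingNorm · ≤ s), filter_filter, filter_filter]
  refine add_le_add ((sum_le_sum_of_subset_of_nonneg ?_ ?_).trans
    (sum_sparse_orthProb_pow_le h2 s m)) ((sum_le_sum_of_subset_of_nonneg ?_ ?_).trans
      (sum_dense_orthProb_pow_le h2 hs m))
  · exact monotone_filter_right _ fun _ _ h ↦ ⟨h.1.1, h.2⟩
  · exact fun _ _ _ ↦ pow_nonneg (orthProb_nonneg _ _) _
  · exact monotone_filter_right _ fun _ _ h ↦ ⟨(not_le.1 h.2).le, h.1.2⟩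
  · exact fun _ _ _ ↦ pow_nonneg (orthProb_nonneg _ _) _

end RichVectors

section SingularProb

open Finset Module
open scoped BigOperators

variable {ι L : Type*} [Fintype ι] [DecidableEq ι] [Fintype L]

/-- The probability that a random square matrix indexed by `ι`, with independent entries distributed
as `φ` of a uniform label, is singular. -/
noncomputable def singularProb (ι : Type*) [Fintype ι] [DecidableEq ι] {R : Type*} [CommRing R]
    (φ : L → R) : ℝ :=
  uniformProb fun M : Matrix ι ι L ↦ (M.map φ).det = 0

lemma det_map_signCast (R : Type*) [CommRing R] (M : Matrix ι ι ℤˣ) :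
    (M.map (signCast R)).det = ((M.map Units.val).det : R) :=
  ((Int.castRingHom R).map_det (M.map Units.val)).symm

lemma singularProb_signCast_real_le (R : Type*) [CommRing R] :
    singularProb ι (signCast ℝ) ≤ singularProb ι (signCast R) := by
  refine uniformProb_mono fun M hM ↦ ?_
  rw [det_map_signCast, Int.cast_eq_zero] at hM
  rw [det_map_signCast, hM, Int.cast_zero]

variable {F : Type*} [Field F]

lemma exists_forall_row_dotProduct_eq_zero {A : Matrix ι ι F} (hA : A.det = 0) :
    ∃ j, ∀ v, (∀ i ≠ j, A i ⬝ᵥ v = 0) → A j ⬝ᵥ v = 0 := by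
  obtain ⟨w, hw, hwA⟩ := Matrix.exists_vecMul_eq_zero_iff.2 hA
  obtain ⟨j, hj⟩ := Function.ne_iff.1 hw
  refine ⟨j, fun v hv ↦ (mul_eq_zero.1 ?_).resolve_left hj⟩
  calc w j * (A j ⬝ᵥ v)
    _ = w ⬝ᵥ A *ᵥ v :=
      (Fintype.sum_eq_single j fun i hi ↦ mul_eq_zero_of_right _ (hv i hi)).symm
    _ = 0 := by rw [dotProduct_mulVec, hwA, zero_dotProduct]

lemma exists_ne_zero_forall_dotProduct_eq_zero {m n : Type*} [Fintype m] [Fintype n]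
    (h : Fintype.card m < Fintype.card n) (y : m → n → F) : ∃ v ≠ 0, ∀ i, y i ⬝ᵥ v = 0 := by
  have hker : LinearMap.ker (Matrix.of y).mulVecLin ≠ ⊥ :=
    LinearMap.ker_ne_bot_of_finrank_lt (by simpa only [finrank_fintype_fun_eq_card] using h)
  obtain ⟨v, hv, hv0⟩ := Submodule.exists_mem_ne_zero_of_ne_bot hker
  exact ⟨v, hv0, congrFun hv⟩

lemma uniformProb_forall_ne_dotProduct_eq_zero [Nonempty L] (φ : L → F) (j : ι) (v : ι → F) :
    uniformProb (fun x : ι → ι → L ↦ ∀ i, i ≠ j → φ ∘ x i ⬝ᵥ v = 0) =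
      orthProb φ v ^ (Fintype.card ι - 1) := by
  rw [uniformProb_pi fun i (r : ι → L) ↦ i ≠ j → φ ∘ r ⬝ᵥ v = 0,
    ← mul_prod_erase univ _ (mem_univ j), ← card_univ, ← card_erase_of_mem (mem_univ j),
    ← prod_const]
  simp only [ne_eq, not_true_eq_false, false_implies, uniformProb_const_true, one_mul]
  refine prod_congr rfl fun i hi ↦ ?_
  simp only [(mem_erase.1 hi).1, not_false_eq_true, true_implies]
  rfl

variable [Fintype F] [DecidableEq F] [Nonempty L]

/-- A normal vector of the rows other than `j` depends only on these rows. Either it is rich, which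
the union bound over the rich vectors controls, or the independent row `j` is unlikely to be
orthogonal to it. -/
lemma uniformProb_row_dependent_le (φ : L → F) {ε : ℝ} (hε : 0 ≤ ε) (j : ι) :
    uniformProb (fun x : ι → ι → L ↦
        ∀ v, (∀ i, i ≠ j → φ ∘ x i ⬝ᵥ v = 0) → φ ∘ x j ⬝ᵥ v = 0) ≤
      ∑ v : ι → F with v ≠ 0 ∧ ε < orthProb φ v, orthProb φ v ^ (Fintype.card ι - 1) + ε := by
  choose normal normal_ne_zero dotProduct_normal using
    exists_ne_zero_forall_dotProduct_eq_zero (F := F)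
      (Fintype.card_subtype_lt (p := (· ≠ j)) (not_not_intro rfl))
  let rows (x : ι → ι → L) (i : {i // i ≠ j}) : ι → F := φ ∘ x i
  calc uniformProb (fun x : ι → ι → L ↦
        ∀ v, (∀ i, i ≠ j → φ ∘ x i ⬝ᵥ v = 0) → φ ∘ x j ⬝ᵥ v = 0)
    _ ≤ uniformProb fun x : ι → ι → L ↦
        (∃ v ∈ ({v | v ≠ 0 ∧ ε < orthProb φ v} : Finset (ι → F)),
          ∀ i, i ≠ j → φ ∘ x i ⬝ᵥ v = 0) ∨
        (orthProb φ (normal (rows x)) ≤ ε ∧ φ ∘ x j ⬝ᵥ normal (rows x) = 0) := by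
      refine uniformProb_mono fun x hx ↦ ?_
      have hnormal : ∀ i, i ≠ j → φ ∘ x i ⬝ᵥ normal (rows x) = 0 := fun i hi ↦
        dotProduct_normal (rows x) ⟨i, hi⟩
      obtain hle | hlt := le_or_gt (orthProb φ (normal (rows x))) ε
      · exact .inr ⟨hle, hx _ hnormal⟩
      · exact .inl ⟨_, (mem_filter_univ _).2 ⟨normal_ne_zero _, hlt⟩, hnormal⟩
    _ ≤ _ := uniformProb_or_le _ _
    _ ≤ ∑ v : ι → F with v ≠ 0 ∧ ε < orthProb φ v, orthProb φ v ^ (Fintype.card ι - 1) + ε := by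
      refine add_le_add ((uniformProb_exists_mem_le _ _).trans_eq
        (sum_congr rfl fun v _ ↦ uniformProb_forall_ne_dotProduct_eq_zero φ j v)) ?_
      rw [← uniformProb_comp_equiv (Equiv.funSplitAt j (ι → L)).symm]
      refine uniformProb_prod_le_of_forall_right fun y ↦ ?_
      have hrows : ∀ r, rows ((Equiv.funSplitAt j (ι → L)).symm (r, y)) = fun i ↦ φ ∘ y i :=
        fun r ↦ funext fun i ↦ by simp [rows, Equiv.funSplitAt, Equiv.piSplitAt, i.2]
      have hrow : ∀ r, (Equiv.funSplitAt j (ι → L)).symm (r, y) j = r := fun r ↦ by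
        simp [Equiv.funSplitAt, Equiv.piSplitAt]
      simp only [hrows, hrow]
      by_cases hle : orthProb φ (normal fun i ↦ φ ∘ y i) ≤ ε
      · exact (uniformProb_mono fun _ ↦ And.right).trans hle
      · simpa [hle, uniformProb] using hε

lemma singularProb_le (φ : L → F) {ε : ℝ} (hε : 0 ≤ ε) :
    singularProb ι φ ≤ Fintype.card ι *
      (∑ v : ι → F with v ≠ 0 ∧ ε < orthProb φ v, orthProb φ v ^ (Fintype.card ι - 1) + ε) := by
  calc singularProb ι φ
    _ ≤ uniformProb fun x : ι → ι → L ↦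
        ∃ j, ∀ v, (∀ i, i ≠ j → φ ∘ x i ⬝ᵥ v = 0) → φ ∘ x j ⬝ᵥ v = 0 :=
      uniformProb_mono fun _ ↦ exists_forall_row_dotProduct_eq_zero
    _ ≤ ∑ j, uniformProb fun x : ι → ι → L ↦
        ∀ v, (∀ i, i ≠ j → φ ∘ x i ⬝ᵥ v = 0) → φ ∘ x j ⬝ᵥ v = 0 := uniformProb_exists_le _
    _ ≤ _ := by
      rw [← nsmul_eq_mul, ← card_univ, ← sum_const]
      exact sum_le_sum fun j _ ↦ uniformProb_row_dependent_le φ hε j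

end SingularProb

section Asymptotics

open Finset Filter
open scoped BigOperators Topology

variable {s : ℕ}

lemma exp_neg_div_sixteen_le (s : ℕ) : Real.exp (-s / 16) ≤ (31 / 32) ^ s := by
  have hbase : Real.exp (-1 / 16) ≤ 31 / 32 := by
    have := exp_neg_div_eight_le (t := 1 / 2) (by norm_num) (by norm_num)
    norm_num at this ⊢
    exact this
  calc Real.exp (-s / 16) = Real.exp (-1 / 16) ^ s := by rw [← Real.exp_nat_mul]; ring_nf
    _ ≤ (31 / 32) ^ s := by gcongr

lemma one_add_inv_pow_le_three (n : ℕ) : (1 + 1 / n : ℝ) ^ (n - 1) ≤ 3 := by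
  obtain rfl | hn := eq_or_ne n 0
  · norm_num
  calc (1 + 1 / n : ℝ) ^ (n - 1)
    _ ≤ (1 + 1 / n) ^ n := pow_le_pow_right₀ (by simp) (n.sub_le 1)
    _ ≤ Real.exp (1 / n) ^ n := by
      gcongr
      rw [add_comm]
      exact Real.add_one_le_exp _
    _ = Real.exp 1 := by
      rw [← Real.exp_nat_mul]
      field_simp
    _ ≤ 3 := Real.exp_one_lt_three.le

lemma one_div_add_pow_mul_pow_le {n : ℕ} (hn : n ≠ 0) {a r : ℝ} (ha : 0 < a) (hr : 0 ≤ r)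
    (h : n * a * r ≤ 1) : (1 / a + r) ^ (n - 1) * a ^ n ≤ 3 * a := by
  have hn' : (0 : ℝ) < n := mod_cast hn.bot_lt
  calc (1 / a + r) ^ (n - 1) * a ^ n
    _ = (1 + a * r) ^ (n - 1) * a := by
      rw [← pow_sub_one_mul hn a, ← mul_assoc, ← mul_pow]
      field_simp
    _ ≤ (1 + 1 / n) ^ (n - 1) * a := by
      gcongr
      rwa [le_div_iff₀' hn', ← mul_assoc]
    _ ≤ 3 * a := by
      gcongr
      exact one_add_inv_pow_le_three n

lemma singularProb_signCast_le_of_prime {ι : Type*} [Fintype ι] [DecidableEq ι]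
    (hι : 2 ≤ Fintype.card ι) {p : ℕ} [Fact p.Prime] (h2 : (2 : ZMod p) ≠ 0)
    (hs : Fintype.card ι * p * (31 / 32 : ℝ) ^ s ≤ 1) :
    singularProb ι (signCast ℝ) ≤ Fintype.card ι *
      (5 * (Fintype.card ι * p) ^ s * (2 / 3) ^ (Fintype.card ι - 1) + 4 / p) := by
  have : Nonempty ι := Fintype.card_pos_iff.1 (by lia)
  set n := Fintype.card ι
  have hn : (2 : ℝ) ≤ n := mod_cast hι
  have hp : (2 : ℝ) ≤ p := mod_cast (Fact.out : p.Prime).two_le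
  have hs₀ : s ≠ 0 := by
    rintro rfl
    nlinarith
  have hexp : p * Real.exp (-s / 16) ≤ 1 / 2 := by
    rw [le_div_iff₀' two_pos, ← mul_assoc]
    exact le_trans (by gcongr; exact exp_neg_div_sixteen_le s) hs
  have hmain := one_div_add_pow_mul_pow_le (n := n) (by lia) (by linarith) (by positivity) hs
  have hle : (p : ℝ) ≤ n * p := le_mul_of_one_le_left (by positivity) (by linarith)
  have hle_pow : (p : ℝ) ≤ (n * p) ^ s := hle.trans (le_self_pow₀ (by nlinarith) hs₀)
  have hpow_le : (p : ℝ) ^ s ≤ (n * p) ^ s := pow_le_pow_left₀ (by positivity) hle s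
  calc singularProb ι (signCast ℝ)
    _ ≤ singularProb ι (signCast (ZMod p)) := singularProb_signCast_real_le _
    _ ≤ n * (∑ v : ι → ZMod p with v ≠ 0 ∧ 4 / p < orthProb (signCast (ZMod p)) v,
        orthProb (signCast (ZMod p)) v ^ (n - 1) + 4 / p) := singularProb_le _ (by positivity)
    _ ≤ n * ((1 / 2) ^ (n - 1) * (n * p) ^ s + (2 / 3) ^ (n - 1) *
        ((1 / p + (31 / 32) ^ s) ^ (n - 1) * p ^ n + p ^ s) + 4 / p) := by
      gcongr
      exact sum_rich_orthProb_pow_le h2 hexp _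
    _ ≤ n * ((2 / 3) ^ (n - 1) * (n * p) ^ s +
        (2 / 3) ^ (n - 1) * (3 * (n * p) ^ s + (n * p) ^ s) + 4 / p) := by
      gcongr n * (?_ ^ _ * _ + _ * (?_ + ?_) + _)
      · norm_num
      · exact hmain.trans (by gcongr)
    _ = n * (5 * (n * p) ^ s * (2 / 3) ^ (n - 1) + 4 / p) := by ring

lemma mul_singularProb_signCast_le {n : ℕ} (hn : 2 ≤ n)
    (hs : 2 * (n : ℝ) ^ 4 * (31 / 32) ^ s ≤ 1) :
    n * singularProb (Fin n) (signCast ℝ) ≤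
      5 * n ^ 2 * (2 * n ^ 4) ^ s * (2 / 3) ^ (n - 1) + 4 / n := by
  obtain ⟨p, hp, hlt, hle⟩ := Nat.exists_prime_lt_and_le_two_mul (n ^ 3) (by positivity)
  have : Fact p.Prime := ⟨hp⟩
  have h2 : (2 : ZMod p) ≠ 0 := fun h ↦ by
    have := Nat.le_of_dvd two_pos ((ZMod.natCast_eq_zero_iff 2 p).1 h)
    have := Nat.pow_le_pow_left hn 3
    lia
  have hlt' : (n : ℝ) ^ 3 ≤ p := mod_cast hlt.le
  have hle' : (n * p : ℝ) ≤ 2 * n ^ 4 := by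
    calc (n * p : ℝ) ≤ n * (2 * n ^ 3) := by gcongr; exact_mod_cast hle
      _ = 2 * n ^ 4 := by ring
  have hbound := singularProb_signCast_le_of_prime (ι := Fin n) (s := s) (by simpa using hn) h2
    (by rw [Fintype.card_fin]; exact le_trans (by gcongr) hs)
  rw [Fintype.card_fin] at hbound
  calc n * singularProb (Fin n) (signCast ℝ)
    _ ≤ n * (n * (5 * (n * p) ^ s * (2 / 3) ^ (n - 1) + 4 / p)) := by gcongr
    _ ≤ n * (n * (5 * (2 * n ^ 4) ^ s * (2 / 3) ^ (n - 1) + 4 / n ^ 3)) := by gcongr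
    _ = 5 * n ^ 2 * (2 * n ^ 4) ^ s * (2 / 3) ^ (n - 1) + 4 / n := by field_simp

lemma tendsto_sqrt_atTop : Tendsto Nat.sqrt atTop atTop :=
  tendsto_atTop_atTop_of_monotone (fun _ _ ↦ Nat.sqrt_le_sqrt) fun b ↦ ⟨b * b, (Nat.sqrt_eq b).ge⟩

lemma tendsto_pow_mul_pow_sqrt (k : ℕ) {r : ℝ} (h0 : 0 < r) (h1 : r < 1) :
    Tendsto (fun n : ℕ ↦ (n : ℝ) ^ k * r ^ n.sqrt) atTop (𝓝 0) := by
  have hlim : Tendsto (fun m : ℕ ↦ r⁻¹ * (((m + 1 : ℕ) : ℝ) ^ (2 * k) * r ^ (m + 1)))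
      atTop (𝓝 0) := by
    rw [← mul_zero r⁻¹]
    exact ((tendsto_add_atTop_iff_nat 1).2 (tendsto_pow_const_mul_const_pow_of_abs_lt_one (2 * k)
      (by rwa [abs_of_pos h0]))).const_mul _
  refine squeeze_zero (fun n ↦ by positivity) (fun n ↦ ?_) (hlim.comp tendsto_sqrt_atTop)
  have hn : (n : ℝ) ≤ ((n.sqrt + 1 : ℕ) : ℝ) ^ 2 := mod_cast (Nat.lt_succ_sqrt' n).le
  calc (n : ℝ) ^ k * r ^ n.sqrt
    _ ≤ (((n.sqrt + 1 : ℕ) : ℝ) ^ 2) ^ k * r ^ n.sqrt := by gcongr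
    _ = r⁻¹ * (((n.sqrt + 1 : ℕ) : ℝ) ^ (2 * k) * r ^ (n.sqrt + 1)) := by
      rw [← pow_mul, pow_succ]
      field_simp

lemma eventually_two_mul_pow_four_mul_pow_sqrt_le {r c : ℝ} (h0 : 0 < r) (h1 : r < 1)
    (hc : 0 < c) : ∀ᶠ n : ℕ in atTop, 2 * (n : ℝ) ^ 4 * r ^ n.sqrt ≤ c := by
  have hlim := (tendsto_pow_mul_pow_sqrt 4 h0 h1).const_mul 2
  rw [mul_zero] at hlim
  filter_upwards [hlim.eventually_le_const hc] with n hn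
  rwa [mul_assoc]

theorem tendsto_mul_singularProb_signCast :
    Tendsto (fun n : ℕ ↦ n * singularProb (Fin n) (signCast ℝ)) atTop (𝓝 0) := by
  have hlim : Tendsto (fun n : ℕ ↦ 15 / 2 * (n ^ 2 * (1 / 2 : ℝ) ^ n.sqrt) + 4 / n)
      atTop (𝓝 0) := by
    simpa using ((tendsto_pow_mul_pow_sqrt 2 one_half_pos one_half_lt_one).const_mul (15 / 2)).add
      (tendsto_const_div_atTop_nhds_zero_nat 4)
  refine squeeze_zero'
    (.of_forall fun n ↦ mul_nonneg (Nat.cast_nonneg n) (uniformProb_nonneg _)) ?_ hlim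
  filter_upwards [eventually_ge_atTop 2,
    eventually_two_mul_pow_four_mul_pow_sqrt_le (r := 31 / 32) (by norm_num) (by norm_num) one_pos,
    eventually_two_mul_pow_four_mul_pow_sqrt_le (r := 2 / 3) (by norm_num) (by norm_num)
      one_half_pos] with n hn hs hs'
  refine (mul_singularProb_signCast_le hn hs).trans (add_le_add_left ?_ _)
  have hpow : (2 / 3 : ℝ) ^ (n - 1) = 3 / 2 * (2 / 3) ^ n := by
    obtain ⟨m, rfl⟩ := Nat.exists_eq_add_of_le' (one_le_two.trans hn)
    rw [Nat.add_sub_cancel, pow_succ]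
    ring
  calc 5 * (n : ℝ) ^ 2 * (2 * n ^ 4) ^ n.sqrt * (2 / 3) ^ (n - 1)
    _ ≤ 5 * n ^ 2 * (2 * n ^ 4) ^ n.sqrt * (3 / 2 * (2 / 3) ^ (n.sqrt * n.sqrt)) := by
      rw [hpow]
      gcongr 5 * n ^ 2 * (2 * n ^ 4) ^ n.sqrt * (3 / 2 * ?_)
      exact pow_le_pow_of_le_one (by norm_num) (by norm_num) (Nat.sqrt_le n)
    _ = 15 / 2 * (n ^ 2 * (2 * n ^ 4 * (2 / 3) ^ n.sqrt) ^ n.sqrt) := by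
      rw [mul_pow (2 * (n : ℝ) ^ 4), ← pow_mul]
      ring
    _ ≤ 15 / 2 * (n ^ 2 * (1 / 2) ^ n.sqrt) := by gcongr

end Asymptotics

section SignSymmetries

open Finset
open scoped BigOperators

variable {ι : Type*} [Fintype ι] [DecidableEq ι]

/-- The solution `C⁻¹𝟙` of `C x = 𝟙`, where `C` is the real sign matrix encoded by `M`. It is the
junk value `0` when `C` is singular. -/
noncomputable def signSolution (M : Matrix ι ι ℤˣ) : ι → ℝ :=
  (M.map (signCast ℝ))⁻¹ *ᵥ 1

lemma isUnit_map_signCast_iff (M : Matrix ι ι ℤˣ) :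
    IsUnit (M.map (signCast ℝ)) ↔ (M.map (signCast ℝ)).det ≠ 0 := by
  rw [isUnit_iff_isUnit_det, isUnit_iff_ne_zero]

lemma uniformProb_isUnit_map_signCast :
    uniformProb (fun M : Matrix ι ι ℤˣ ↦ IsUnit (M.map (signCast ℝ))) =
      1 - singularProb ι (signCast ℝ) := by
  rw [singularProb, eq_sub_iff_add_eq', uniformProb_congr isUnit_map_signCast_iff]
  exact uniformProb_add_not _

section ScaleCols

/-- Multiplication of each column `j` of a matrix of signs by the sign `d j`. -/
def scaleCols (d : ι → ℤˣ) : Matrix ι ι ℤˣ ≃ Matrix ι ι ℤˣ :=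
  (Equiv.mulRight fun _ ↦ d : Equiv.Perm (ι → ι → ℤˣ))

lemma map_scaleCols (d : ι → ℤˣ) (M : Matrix ι ι ℤˣ) :
    (scaleCols d M).map (signCast ℝ) = M.map (signCast ℝ) * diagonal (signCast ℝ ∘ d) := by
  ext i j
  rw [mul_diagonal]
  exact map_mul (signCast ℝ) (M i j) (d j)

lemma diagonal_signCast_mul_self (d : ι → ℤˣ) :
    diagonal (signCast ℝ ∘ d) * diagonal (signCast ℝ ∘ d) = 1 := by
  rw [diagonal_mul_diagonal, ← diagonal_one]
  congr 1
  ext i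
  simp [← map_mul, Int.units_mul_self]

lemma isUnit_map_scaleCols_iff (d : ι → ℤˣ) (M : Matrix ι ι ℤˣ) :
    IsUnit ((scaleCols d M).map (signCast ℝ)) ↔ IsUnit (M.map (signCast ℝ)) := by
  have hD := diagonal_signCast_mul_self d
  rw [map_scaleCols]
  exact Units.isUnit_mul_units _ ⟨_, _, hD, hD⟩

lemma signSolution_scaleCols (d : ι → ℤˣ) (M : Matrix ι ι ℤˣ) (j : ι) :
    signSolution (scaleCols d M) j = signCast ℝ (d j) * signSolution M j := by
  rw [signSolution, map_scaleCols, Matrix.mul_inv_rev,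
    inv_eq_right_inv (diagonal_signCast_mul_self d), ← mulVec_mulVec, mulVec_diagonal,
    signSolution, Function.comp_apply]

lemma uniformProb_signCast_mul_pos (a : ℝ) :
    uniformProb (fun u ↦ 0 < signCast ℝ u * a) = if a ≠ 0 then 1 / 2 else 0 := by
  rw [uniformProb_eq_expect_ite, expect_signCast fun s ↦ if 0 < s * a then (1 : ℝ) else 0]
  obtain ha | rfl | ha := lt_trichotomy a 0
  · simp [ha, ha.not_gt, ha.ne]
  · simp
  · simp [ha, ha.not_gt, ha.ne']

/-- Flipping the signs of the columns flips the signs of the coordinates of the solution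
independently. -/
lemma two_pow_mul_uniformProb_signSolution_pos :
    2 ^ Fintype.card ι * uniformProb (fun M : Matrix ι ι ℤˣ ↦
        IsUnit (M.map (signCast ℝ)) ∧ ∀ i, 0 < signSolution M i) =
      uniformProb fun M : Matrix ι ι ℤˣ ↦
        IsUnit (M.map (signCast ℝ)) ∧ ∀ i, signSolution M i ≠ 0 := by
  classical
  have hsigns : ∀ x : ι → ℝ, uniformProb (fun d : ι → ℤˣ ↦ ∀ i, 0 < signCast ℝ (d i) * x i) =
      (1 / 2) ^ Fintype.card ι * if ∀ i, x i ≠ 0 then 1 else 0 := fun x ↦ by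
    simp_rw [uniformProb_pi fun i u ↦ 0 < signCast ℝ u * x i, uniformProb_signCast_mul_pos,
      Fintype.prod_ite_zero, prod_const, card_univ, mul_ite, mul_one, mul_zero]
  have hscale : ∀ d : ι → ℤˣ, uniformProb (fun M : Matrix ι ι ℤˣ ↦
      IsUnit (M.map (signCast ℝ)) ∧ ∀ i, 0 < signSolution M i) =
        𝔼 M : Matrix ι ι ℤˣ, (if IsUnit (M.map (signCast ℝ)) then 1 else 0) *
          if ∀ i, 0 < signCast ℝ (d i) * signSolution M i then 1 else 0 := fun d ↦ by
    rw [← uniformProb_comp_equiv (scaleCols d)]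
    simp_rw [isUnit_map_scaleCols_iff, signSolution_scaleCols, uniformProb_eq_expect_ite, ite_and,
      ite_mul, one_mul, zero_mul]
  have hmean : uniformProb (fun M : Matrix ι ι ℤˣ ↦
      IsUnit (M.map (signCast ℝ)) ∧ ∀ i, 0 < signSolution M i) =
        (1 / 2) ^ Fintype.card ι * uniformProb fun M : Matrix ι ι ℤˣ ↦
          IsUnit (M.map (signCast ℝ)) ∧ ∀ i, signSolution M i ≠ 0 := by
    rw [← Fintype.expect_const (ι := ι → ℤˣ) (uniformProb _), expect_congr rfl fun d _ ↦ hscale d,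
      expect_comm]
    simp_rw [← mul_expect, ← uniformProb_eq_expect_ite, hsigns]
    rw [uniformProb_eq_expect_ite, mul_expect]
    refine expect_congr rfl fun M _ ↦ ?_
    rw [mul_left_comm, ite_and, ite_mul, one_mul, zero_mul]
  rw [hmean, ← mul_assoc, ← mul_pow, mul_one_div_cancel two_ne_zero, one_pow, one_mul]

end ScaleCols

section ZeroCoordinate

/-- Multiplication of each row of a matrix of signs by its entry in column `i`, except that column
`i` itself is kept, which makes the operation an involution. -/
def normalizeRows (i : ι) (M : Matrix ι ι ℤˣ) : Matrix ι ι ℤˣ :=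
  of fun j k ↦ if k = i then M j i else M j i * M j k

lemma normalizeRows_involutive {ι : Type*} [DecidableEq ι] (i : ι) :
    Function.Involutive (normalizeRows i) := fun M ↦ by
  ext j k
  by_cases hk : k = i <;> simp [normalizeRows, hk, ← mul_assoc, Int.units_mul_self]

lemma det_map_normalizeRows (i : ι) (M : Matrix ι ι ℤˣ) :
    ((normalizeRows i M).map (signCast ℝ)).det =
      (∏ j, signCast ℝ (M j i)) * ((M.map (signCast ℝ)).updateCol i 1).det := by
  rw [← det_mul_column]
  congr 1
  ext j k
  by_cases hk : k = i
  · subst hk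
    simp [normalizeRows]
  · simp [normalizeRows, hk]

lemma uniformProb_det_updateCol_one_eq_zero (i : ι) :
    uniformProb (fun M : Matrix ι ι ℤˣ ↦ ((M.map (signCast ℝ)).updateCol i 1).det = 0) =
      singularProb ι (signCast ℝ) := by
  rw [singularProb, ← uniformProb_comp_equiv (normalizeRows_involutive i).toPerm fun M ↦
    (M.map (signCast ℝ)).det = 0]
  refine uniformProb_congr fun M ↦ ?_
  have hsigns : ∏ j, signCast ℝ (M j i) ≠ 0 := prod_ne_zero_iff.2 fun j _ ↦
    ((Group.isUnit (M j i)).map (signCast ℝ)).ne_zero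
  rw [Function.Involutive.coe_toPerm, det_map_normalizeRows, mul_eq_zero, or_iff_right hsigns]

/-- By Cramer's rule, a vanishing coordinate of the solution amounts to a singular matrix. -/
lemma uniformProb_signSolution_eq_zero_le (i : ι) :
    uniformProb (fun M : Matrix ι ι ℤˣ ↦ IsUnit (M.map (signCast ℝ)) ∧ signSolution M i = 0) ≤
      singularProb ι (signCast ℝ) := by
  rw [← uniformProb_det_updateCol_one_eq_zero i]
  refine uniformProb_mono fun M ⟨hM, hi⟩ ↦ ?_
  rw [← cramer_apply, ← det_smul_inv_mulVec_eq_cramer _ _ ((isUnit_iff_isUnit_det _).1 hM)]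
  exact mul_eq_zero_of_right _ hi

lemma le_uniformProb_signSolution_ne_zero :
    1 - singularProb ι (signCast ℝ) - Fintype.card ι * singularProb ι (signCast ℝ) ≤
      uniformProb fun M : Matrix ι ι ℤˣ ↦
        IsUnit (M.map (signCast ℝ)) ∧ ∀ i, signSolution M i ≠ 0 := by
  rw [sub_le_iff_le_add, ← uniformProb_isUnit_map_signCast]
  calc uniformProb (fun M : Matrix ι ι ℤˣ ↦ IsUnit (M.map (signCast ℝ)))
    _ ≤ uniformProb fun M : Matrix ι ι ℤˣ ↦
        (IsUnit (M.map (signCast ℝ)) ∧ ∀ i, signSolution M i ≠ 0) ∨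
          ∃ i, IsUnit (M.map (signCast ℝ)) ∧ signSolution M i = 0 :=
      uniformProb_mono fun M hM ↦ by
        by_cases h : ∀ i, signSolution M i ≠ 0
        · exact .inl ⟨hM, h⟩
        · push Not at h
          exact .inr (h.imp fun _ hi ↦ ⟨hM, hi⟩)
    _ ≤ _ := uniformProb_or_le _ _
    _ ≤ _ := by
      gcongr
      refine (uniformProb_exists_le _).trans ?_
      rw [← nsmul_eq_mul, ← card_univ, ← sum_const]
      exact sum_le_sum fun i _ ↦ uniformProb_signSolution_eq_zero_le i

end ZeroCoordinate

end SignSymmetries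

section Proportion

open Filter
open scoped Topology

lemma isSignMatrix_iff_exists_map {n : ℕ} (C : Matrix (Fin n) (Fin n) ℝ) :
    IsSignMatrix C ↔ ∃ M : Matrix (Fin n) (Fin n) ℤˣ, M.map (signCast ℝ) = C := by
  refine ⟨fun hC ↦ ?_, ?_⟩
  · have hentry : ∀ i j, ∃ u, signCast ℝ u = C i j := fun i j ↦
      (hC i j).elim (fun h ↦ ⟨1, by simp [h]⟩) fun h ↦ ⟨-1, by simp [h, signCast]⟩
    choose M hM using hentry
    exact ⟨of M, Matrix.ext hM⟩
  · rintro ⟨M, rfl⟩ i j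
    obtain h | h := Int.units_eq_one_or (M i j) <;> simp [signCast, h]

lemma signCast_real_injective : Function.Injective (signCast ℝ) :=
  Int.cast_injective.comp Units.val_injective

lemma card_isSignMatrix_and {n : ℕ} (Q : Matrix (Fin n) (Fin n) ℝ → Prop) :
    Nat.card {C : Matrix (Fin n) (Fin n) ℝ // IsSignMatrix C ∧ Q C} =
      Nat.card {M : Matrix (Fin n) (Fin n) ℤˣ // Q (M.map (signCast ℝ))} := by
  let encode (M : {M : Matrix (Fin n) (Fin n) ℤˣ // Q (M.map (signCast ℝ))}) :
      {C : Matrix (Fin n) (Fin n) ℝ // IsSignMatrix C ∧ Q C} :=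
    ⟨M.1.map (signCast ℝ), (isSignMatrix_iff_exists_map _).2 ⟨M, rfl⟩, M.2⟩
  refine (Nat.card_congr (Equiv.ofBijective encode ⟨fun M N h ↦ ?_, ?_⟩)).symm
  · exact Subtype.ext (map_injective signCast_real_injective (congrArg Subtype.val h))
  · rintro ⟨C, hC, hQ⟩
    obtain ⟨M, rfl⟩ := (isSignMatrix_iff_exists_map C).1 hC
    exact ⟨⟨M, hQ⟩, rfl⟩

lemma rn_eq_uniformProb_div (n : ℕ) :
    rn n = uniformProb (fun M : Matrix (Fin n) (Fin n) ℤˣ ↦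
        IsUnit (M.map (signCast ℝ)) ∧ ∀ i, 0 < signSolution M i) /
      uniformProb fun M : Matrix (Fin n) (Fin n) ℤˣ ↦ IsUnit (M.map (signCast ℝ)) := by
  have hcard : (Fintype.card (Matrix (Fin n) (Fin n) ℤˣ) : ℝ) ≠ 0 :=
    Nat.cast_ne_zero.2 Fintype.card_ne_zero
  rw [rn, card_isSignMatrix_and fun C ↦ IsUnit C ∧ ∀ i, 0 < (C⁻¹ *ᵥ (1 : Fin n → ℝ)) i,
    card_isSignMatrix_and IsUnit, uniformProb_eq_card_div_card, uniformProb_eq_card_div_card,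
    div_div_div_cancel_right₀ hcard]
  rfl

lemma two_pow_mul_rn (n : ℕ) :
    2 ^ n * rn n = uniformProb (fun M : Matrix (Fin n) (Fin n) ℤˣ ↦
        IsUnit (M.map (signCast ℝ)) ∧ ∀ i, signSolution M i ≠ 0) /
      uniformProb fun M : Matrix (Fin n) (Fin n) ℤˣ ↦ IsUnit (M.map (signCast ℝ)) := by
  rw [rn_eq_uniformProb_div, ← two_pow_mul_uniformProb_signSolution_pos, Fintype.card_fin,
    mul_div_assoc]

lemma tendsto_singularProb_signCast :
    Tendsto (fun n : ℕ ↦ singularProb (Fin n) (signCast ℝ)) atTop (𝓝 0) := by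
  refine squeeze_zero' (.of_forall fun n ↦ uniformProb_nonneg _) ?_
    tendsto_mul_singularProb_signCast
  filter_upwards [eventually_ge_atTop 1] with n hn
  exact le_mul_of_one_le_left (uniformProb_nonneg _) (mod_cast hn)

lemma tendsto_uniformProb_isUnit :
    Tendsto (fun n ↦ uniformProb fun M : Matrix (Fin n) (Fin n) ℤˣ ↦
      IsUnit (M.map (signCast ℝ))) atTop (𝓝 1) := by
  simp_rw [uniformProb_isUnit_map_signCast]
  simpa using tendsto_singularProb_signCast.const_sub 1

lemma tendsto_uniformProb_signSolution_ne_zero :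
    Tendsto (fun n ↦ uniformProb fun M : Matrix (Fin n) (Fin n) ℤˣ ↦
      IsUnit (M.map (signCast ℝ)) ∧ ∀ i, signSolution M i ≠ 0) atTop (𝓝 1) := by
  have hlower : Tendsto (fun n : ℕ ↦ 1 - singularProb (Fin n) (signCast ℝ) -
      n * singularProb (Fin n) (signCast ℝ)) atTop (𝓝 1) := by
    simpa using (tendsto_singularProb_signCast.const_sub 1).sub tendsto_mul_singularProb_signCast
  refine tendsto_of_tendsto_of_tendsto_of_le_of_le hlower tendsto_const_nhds (fun n ↦ ?_)
    fun n ↦ uniformProb_le_one _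
  simpa using le_uniformProb_signSolution_ne_zero (ι := Fin n)

end Proportion

/-- Lemma (Lemma `lemma-aux1`): `r_n ∼ 1/2ⁿ`, i.e. `lim_{n→∞} 2ⁿ r_n = 1`. -/
theorem rn_asymptotic :
    Filter.Tendsto (fun n : ℕ => (2 : ℝ) ^ n * rn n) Filter.atTop (nhds 1) := by
  simp_rw [two_pow_mul_rn]
  rw [← div_one (1 : ℝ)]
  exact tendsto_uniformProb_signSolution_ne_zero.div tendsto_uniformProb_isUnit one_ne_zero
end

section
/- Let n ≥ 2 and let C be an invertible n×n sign matrix. If all coordinates of C⁻¹𝟙 are strictly positive, then 1 + 𝟙ᵀC⁻¹𝟙 > 0; if all coordinates of C⁻¹𝟙 are strictly negative, then 1 + 𝟙ᵀC⁻¹𝟙 < 0. -/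
open Matrix

/-!
Every row `c` of `C` satisfies `c ⬝ᵥ x = 1` for `x = C⁻¹𝟙`. When `x` is negative, the entries of `C`
being at least `-1` gives `1 = c ⬝ᵥ x ≤ -𝟙 ⬝ᵥ x`. The inequality is strict for any row that is not
constantly `-1`, and such a row exists because a constant matrix of size at least two is singular.
-/

theorem dotProduct_lt_dotProduct_of_neg_right {ι R : Type*} [Fintype ι] [Ring R] [PartialOrder R]
    [IsStrictOrderedRing R] {u v w : ι → R} (huv : u < v) (hw : ∀ i, w i < 0) :
    v ⬝ᵥ w < u ⬝ᵥ w := by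
  obtain ⟨hle, i, hi⟩ := Pi.lt_def.mp huv
  exact Finset.sum_lt_sum (fun j _ ↦ mul_le_mul_of_nonpos_right (hle j) (hw j).le)
    ⟨i, Finset.mem_univ i, mul_lt_mul_of_neg_right hi (hw i)⟩

section

variable {ι R : Type*} [Fintype ι] [DecidableEq ι] [Nontrivial ι] [CommRing R]

theorem exists_apply_ne_of_isUnit [Nontrivial R] {C : Matrix ι ι R} (hC : IsUnit C) (c : R) :
    ∃ i j, C i j ≠ c := by
  by_contra! hconst
  obtain ⟨i, k, hik⟩ := exists_pair_ne ι
  have hrow : C i = C k := funext fun j ↦ (hconst i j).trans (hconst k j).symm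
  exact ((isUnit_iff_isUnit_det C).mp hC).ne_zero (det_zero_of_row_eq hik hrow)

theorem one_add_quadform_sign_general [PartialOrder R] [IsStrictOrderedRing R]
    {C : Matrix ι ι R} (hC : ∀ i j, -1 ≤ C i j) (hinv : IsUnit C) :
    ((∀ i, 0 ≤ (C⁻¹ *ᵥ (1 : ι → R)) i) → 0 < 1 + (1 : ι → R) ⬝ᵥ (C⁻¹ *ᵥ (1 : ι → R))) ∧
    ((∀ i, (C⁻¹ *ᵥ (1 : ι → R)) i < 0) → 1 + (1 : ι → R) ⬝ᵥ (C⁻¹ *ᵥ (1 : ι → R)) < 0) := by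
  set x := C⁻¹ *ᵥ (1 : ι → R) with hx
  constructor
  · intro hnonneg
    exact add_pos_of_pos_of_nonneg one_pos (dotProduct_nonneg_of_nonneg zero_le_one hnonneg)
  · intro hneg
    have hCx : C *ᵥ x = 1 := by
      rw [hx, mulVec_mulVec, mul_nonsing_inv C ((isUnit_iff_isUnit_det C).mp hinv), one_mulVec]
    obtain ⟨i, j, hij⟩ := exists_apply_ne_of_isUnit hinv (-1)
    have hrow : -1 < C i := Pi.lt_def.mpr ⟨hC i, j, (hC i j).lt_of_ne' hij⟩
    calc 1 + 1 ⬝ᵥ x = C i ⬝ᵥ x + 1 ⬝ᵥ x := congrArg (· + 1 ⬝ᵥ x) (congrFun hCx i).symm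
      _ < -1 ⬝ᵥ x + 1 ⬝ᵥ x := by gcongr; exact dotProduct_lt_dotProduct_of_neg_right hrow hneg
      _ = 0 := by rw [neg_dotProduct, neg_add_cancel]

end

/-- For `n ≥ 2` and an invertible sign matrix `C`: if all coordinates of `C⁻¹𝟙`
are strictly positive then `1 + 𝟙ᵀC⁻¹𝟙 > 0`, and if all coordinates of `C⁻¹𝟙`
are strictly negative then `1 + 𝟙ᵀC⁻¹𝟙 < 0`. -/
theorem one_add_quadform_sign (n : ℕ) (hn : 2 ≤ n)
    (C : Matrix (Fin n) (Fin n) ℝ) (hC : IsSignMatrix C) (hinv : IsUnit C) :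
    ((∀ i, 0 < (C⁻¹ *ᵥ (1 : Fin n → ℝ)) i) →
      0 < 1 + (1 : Fin n → ℝ) ⬝ᵥ (C⁻¹ *ᵥ (1 : Fin n → ℝ))) ∧
    ((∀ i, (C⁻¹ *ᵥ (1 : Fin n → ℝ)) i < 0) →
      1 + (1 : Fin n → ℝ) ⬝ᵥ (C⁻¹ *ᵥ (1 : Fin n → ℝ)) < 0) := by
  have : Nontrivial (Fin n) := Fin.nontrivial_iff_two_le.mpr hn
  have hge (i j) : -1 ≤ C i j := by rcases hC i j with h | h <;> norm_num [h]
  exact (one_add_quadform_sign_general hge hinv).imp_left fun h hpos ↦ h fun i ↦ (hpos i).le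
end

section
/- The number M_n of n×n matrices with entries in {0,1} that are invertible over ℝ and whose unique solution x of Mx = 𝟙 is componentwise strictly positive satisfies M_n ∼ 2^{n²−n+1}, i.e., lim_{n→∞} M_n / 2^{n²−n+1} = 1. -/
open Matrix

/-- `M_n`: the number of `n×n` matrices with entries in `{0,1}` that are invertible
over `ℝ` and whose unique solution `x = M⁻¹ 𝟙` of `M x = 𝟙` is componentwise
strictly positive. -/
noncomputable def Mcard (n : ℕ) : ℕ :=
  Nat.card {M : Matrix (Fin n) (Fin n) ℝ //
    (∀ i j, M i j = 0 ∨ M i j = 1) ∧ IsUnit M ∧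
      ∀ j, 0 < (M⁻¹ *ᵥ (1 : Fin n → ℝ)) j}

/-!
A zero-one matrix is `(S + J) / 2` with `S` a sign matrix and `J` the all-ones matrix. If `S` is
invertible and `S y = 𝟙`, then `(S + J) / 2 * x = 𝟙` is solved by `x = 2 y / (1 + ∑ y)`, and `x > 0`
exactly when the coordinates of `y` are nonzero of constant sign. Flipping the signs of the columns
of `S` flips the signs of the coordinates of `y`, so each of the `2 ^ (n ^ 2 - n)` orbits of column
flips contains at most two good matrices, and exactly two if no `y i` vanishes. By Cramer's rule
`y i = 0` means that `S` with its `i`-th column replaced by `𝟙` is singular, so it suffices that a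
random sign matrix is singular with probability `o(1 / n)`.

A singular sign matrix annihilates an integer vector not divisible by `3`; take its residues
`w` modulo `3 ^ j` for `j ≤ b`, where `3 ^ b ≍ n ^ 3`. By Fourier inversion the probability that a
random row annihilates `w` is the average over `r` of `∏ i, cos (2 π r w i / 3 ^ j)`. If all
nontrivial products at level `b` are at most `η = 1 / (n 3 ^ b)`, that probability is about
`3 ^ (-b)`, and there are at most `n 3 ^ (b (n - 1))` vectors with a coordinate `1`. Otherwise let
`j + 1` be the first level at which some product exceeds `η`: the sixth moment of the cosine leaves
at most `η ^ (-6) (5 / 16 * 3 ^ (j + 1)) ^ n` multiples of `w`, while each row annihilates `w` with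
probability about `3 ^ (-j)`, and `3 * 5 / 16 < 1`.
-/

namespace SignMatrix

open Finset

variable {ι : Type*}

section Character

variable {N : ℕ} [NeZero N]

/-- The function `x ↦ cos (2πx/N)` on `ZMod N`, that is, the real part of the standard additive
character. -/
noncomputable def cosChar (x : ZMod N) : ℝ := (ZMod.stdAddChar x).re

lemma cosChar_intCast (k : ℤ) : cosChar (k : ZMod N) = Real.cos (2 * Real.pi * k / N) := by
  rw [cosChar, ZMod.stdAddChar_coe, ← Complex.exp_ofReal_mul_I_re]
  push_cast
  ring_nf

@[simp]
lemma cosChar_zero : cosChar (0 : ZMod N) = 1 := by simp [cosChar]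

lemma abs_cosChar_le_one (x : ZMod N) : |cosChar x| ≤ 1 := by
  obtain ⟨k, rfl⟩ := ZMod.intCast_surjective x
  rw [cosChar_intCast]
  exact Real.abs_cos_le_one _

lemma cosChar_two_mul (x : ZMod N) : cosChar (2 * x) = 2 * cosChar x ^ 2 - 1 := by
  obtain ⟨k, rfl⟩ := ZMod.intCast_surjective x
  have h := cosChar_intCast (N := N) (2 * k)
  push_cast at h
  rw [h, cosChar_intCast, ← Real.cos_two_mul]
  ring_nf

lemma cosChar_three_mul (x : ZMod N) : cosChar (3 * x) = 4 * cosChar x ^ 3 - 3 * cosChar x := by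
  obtain ⟨k, rfl⟩ := ZMod.intCast_surjective x
  have h := cosChar_intCast (N := N) (3 * k)
  push_cast at h
  rw [h, cosChar_intCast, ← Real.cos_three_mul]
  ring_nf

lemma cosChar_pow_six (x : ZMod N) :
    cosChar x ^ 6 = (10 + 15 * cosChar (2 * x) + 6 * cosChar (4 * x) + cosChar (6 * x)) / 32 := by
  have h₄ : (4 : ZMod N) * x = 2 * (2 * x) := by ring
  have h₆ : (6 : ZMod N) * x = 3 * (2 * x) := by ring
  rw [h₄, h₆, cosChar_three_mul, cosChar_two_mul (2 * x), cosChar_two_mul x]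
  ring

lemma cosChar_natCast_mul_intCast {M d : ℕ} [NeZero M] (h : M = d * N) (k : ℤ) :
    cosChar ((d : ZMod M) * (k : ZMod M)) = cosChar (k : ZMod N) := by
  subst h
  have hd : (d : ℝ) ≠ 0 := Nat.cast_ne_zero.mpr (left_ne_zero_of_mul (NeZero.ne (d * N)))
  have h := cosChar_intCast (N := d * N) (d * k)
  push_cast at h
  rw [h, cosChar_intCast, mul_left_comm, mul_div_mul_left _ _ hd]

lemma sum_cosChar_mul (a : ZMod N) : ∑ x, cosChar (a * x) = if a = 0 then (N : ℝ) else 0 := by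
  have h := congrArg Complex.re (AddChar.sum_mulShift a (ZMod.isPrimitive_stdAddChar N))
  rw [Complex.re_sum] at h
  simp_rw [mul_comm a, cosChar, h]
  split_ifs <;> simp

lemma sum_cosChar_pow_six :
    ∑ x : ZMod N, cosChar x ^ 6 =
      (10 * N + 15 * (if (2 : ZMod N) = 0 then (N : ℝ) else 0)
        + 6 * (if (4 : ZMod N) = 0 then (N : ℝ) else 0)
        + (if (6 : ZMod N) = 0 then (N : ℝ) else 0)) / 32 := by
  simp_rw [cosChar_pow_six, ← sum_div, sum_add_distrib, ← mul_sum, sum_cosChar_mul]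
  simp [mul_comm]

lemma sum_cosChar_pow_six_of_seven_le (hN : 7 ≤ N) :
    ∑ x : ZMod N, cosChar x ^ 6 = 5 / 16 * N := by
  have natCast_ne_zero (k : ℕ) (hk : 0 < k) (hk7 : k < 7) : (k : ZMod N) ≠ 0 := fun h =>
    (Nat.le_of_dvd hk ((ZMod.natCast_eq_zero_iff k N).mp h)).not_gt (hk7.trans_le hN)
  rw [sum_cosChar_pow_six, if_neg (mod_cast natCast_ne_zero 2 (by lia) (by lia)),
    if_neg (mod_cast natCast_ne_zero 4 (by lia) (by lia)),
    if_neg (mod_cast natCast_ne_zero 6 (by lia) (by lia))]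
  ring

lemma sum_cosChar_pow_six_three : ∑ x : ZMod 3, cosChar x ^ 6 = 33 / 32 := by
  rw [sum_cosChar_pow_six, if_neg (by decide), if_neg (by decide), if_pos (by decide)]
  norm_num

lemma cosChar_neg (x : ZMod N) : cosChar (-x) = cosChar x := by
  rw [cosChar, AddChar.map_neg_eq_conj, Complex.conj_re, cosChar]

lemma abs_cosChar_three {x : ZMod 3} (hx : x ≠ 0) : |cosChar x| = 1 / 2 := by
  have sum_eq_zero : cosChar (x * 0) + cosChar (x * 1) + cosChar (x * 2) = 0 :=
    (Fin.sum_univ_three fun y : ZMod 3 => cosChar (x * y)).symm.trans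
      ((sum_cosChar_mul x).trans (if_neg hx))
  rw [show (2 : ZMod 3) = -1 from rfl, mul_neg, cosChar_neg, mul_zero, mul_one,
    cosChar_zero] at sum_eq_zero
  rw [show cosChar x = -(1 / 2) by linarith, abs_neg, abs_of_pos one_half_pos]

end Character

section SignedSums

variable [Fintype ι] [DecidableEq ι] {A : Type*} [AddCommGroup A] [DecidableEq A]

/-- The sign vectors `ε` for which the signed sum `∑ i, ε i • w i` vanishes. -/
def signRelations (w : ι → A) : Finset (ι → ℤˣ) := {ε | ∑ i, ε i • w i = 0}

lemma mem_signRelations {w : ι → A} {ε : ι → ℤˣ} :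
    ε ∈ signRelations w ↔ ∑ i, ε i • w i = 0 := by
  simp [signRelations]

lemma signRelations_subset_comp {B : Type*} [AddCommGroup B] [DecidableEq B] (f : A →+ B)
    (w : ι → A) : signRelations w ⊆ signRelations (f ∘ w) := by
  intro ε hε
  rw [mem_signRelations] at hε ⊢
  simpa [Units.smul_def] using congrArg f hε

lemma signRelations_unit_smul {R : Type*} [Ring R] [DecidableEq R] (u : Rˣ) (w : ι → R) :
    signRelations (u • w) = signRelations w := by
  ext ε
  simp_rw [mem_signRelations, Pi.smul_apply, smul_comm _ u, ← smul_sum, smul_eq_zero_iff_eq]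

/-- The sign matrices, given by their rows, that annihilate some vector of `W`. -/
def annihilators (W : Finset (ι → A)) : Finset (ι → ι → ℤˣ) :=
  W.biUnion fun w => Fintype.piFinset fun _ => signRelations w

lemma mem_annihilators {W : Finset (ι → A)} {S : ι → ι → ℤˣ} :
    S ∈ annihilators W ↔ ∃ w ∈ W, ∀ k, S k ∈ signRelations w := by
  simp [annihilators]

lemma card_annihilators_le {W : Finset (ι → A)} {R : ℝ}
    (hW : ∀ w ∈ W, (#(signRelations w) : ℝ) ≤ R) :
    (#(annihilators W) : ℝ) ≤ #W * R ^ Fintype.card ι := by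
  calc (#(annihilators W) : ℝ)
      ≤ ∑ w ∈ W, (#(Fintype.piFinset fun _ : ι => signRelations w) : ℝ) :=
        mod_cast card_biUnion_le
    _ = ∑ w ∈ W, (#(signRelations w) : ℝ) ^ Fintype.card ι := by
        simp only [Fintype.card_piFinset, prod_const, card_univ, Nat.cast_pow]
    _ ≤ ∑ _w ∈ W, R ^ Fintype.card ι := by gcongr with w hw; exact hW w hw
    _ = #W * R ^ Fintype.card ι := by rw [sum_const, nsmul_eq_mul]

end SignedSums

section Bias

variable [Fintype ι] {N : ℕ} [NeZero N]

/-- The absolute value of the Fourier coefficient, at frequency one, of the distribution of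
`∑ i, ε i • w i` for a uniformly random sign vector `ε`. -/
noncomputable def bias (w : ι → ZMod N) : ℝ := |∏ i, cosChar (w i)|

/-- All nontrivial Fourier coefficients of the random signed sum `∑ i, ε i • w i` are at most `η`
in absolute value. -/
def IsSpread (η : ℝ) (w : ι → ZMod N) : Prop := ∀ r : ZMod N, r ≠ 0 → bias (r • w) ≤ η

lemma isSpread_half_of_ne_zero {w : ι → ZMod 3} {i : ι} (hi : w i ≠ 0) : IsSpread (1 / 2) w := by
  intro r hr
  classical
  rw [bias, abs_prod, ← mul_prod_erase univ _ (mem_univ i), Pi.smul_apply, smul_eq_mul,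
    abs_cosChar_three (mul_ne_zero hr hi)]
  exact mul_le_of_le_one_right one_half_pos.le
    (prod_le_one (fun _ _ => abs_nonneg _) fun _ _ => abs_cosChar_le_one _)

variable [DecidableEq ι]

lemma sum_units_stdAddChar (x : ZMod N) :
    ∑ u : ℤˣ, ZMod.stdAddChar (u • x) = 2 * (cosChar x : ℂ) := by
  rw [UnitsInt.univ, sum_pair (by decide), one_smul, Units.neg_smul, one_smul,
    AddChar.map_neg_eq_conj, Complex.add_conj, cosChar]
  push_cast
  rfl

lemma sum_signs_stdAddChar (w : ι → ZMod N) :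
    ∑ ε : ι → ℤˣ, ZMod.stdAddChar (∑ i, ε i • w i) =
      2 ^ Fintype.card ι * ∏ i, (cosChar (w i) : ℂ) := by
  have map_sum (ε : ι → ℤˣ) : ZMod.stdAddChar (∑ i, ε i • w i) =
      ∏ i, ZMod.stdAddChar (ε i • w i) :=
    map_prod (ZMod.stdAddChar (N := N)).toMonoidHom
      (fun i => Multiplicative.ofAdd (ε i • w i)) univ
  simp_rw [map_sum]
  rw [← Fintype.prod_sum fun i (u : ℤˣ) => ZMod.stdAddChar (u • w i)]
  simp_rw [sum_units_stdAddChar, prod_mul_distrib, prod_const, card_univ]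

lemma card_signRelations_mul (w : ι → ZMod N) :
    (#(signRelations w) : ℝ) * N =
      2 ^ Fintype.card ι * ∑ r : ZMod N, ∏ i, cosChar (r * w i) := by
  have orthogonality (ε : ι → ℤˣ) :
      ∑ r : ZMod N, ZMod.stdAddChar (∑ i, ε i • (r * w i)) =
        if ∑ i, ε i • w i = 0 then (N : ℂ) else 0 := by
    simp_rw [← mul_smul_comm, ← mul_sum]
    rw [AddChar.sum_mulShift _ (ZMod.isPrimitive_stdAddChar N)]
    split_ifs <;> simp
  have h : (#(signRelations w) : ℂ) * N =
      2 ^ Fintype.card ι * ∑ r : ZMod N, ∏ i, (cosChar (r * w i) : ℂ) := by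
    simp_rw [mul_sum, ← sum_signs_stdAddChar]
    rw [sum_comm]
    simp_rw [orthogonality, ← sum_filter, sum_const, nsmul_eq_mul]
    rfl
  exact_mod_cast h

lemma IsSpread.card_signRelations_le {η : ℝ} (hη : 0 ≤ η) {w : ι → ZMod N} (hw : IsSpread η w) :
    (#(signRelations w) : ℝ) ≤ 2 ^ Fintype.card ι * (1 / N + η) := by
  have hN : (0 : ℝ) < N := Nat.cast_pos.mpr (NeZero.pos N)
  have sum_le : ∑ r : ZMod N, ∏ i, cosChar (r * w i) ≤ 1 + N * η := by
    rw [← add_sum_erase univ _ (mem_univ 0)]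
    gcongr
    · simp
    · calc ∑ r ∈ univ.erase 0, ∏ i, cosChar (r * w i)
          ≤ ∑ _r ∈ univ.erase (0 : ZMod N), η :=
            sum_le_sum fun r hr => (le_abs_self _).trans (hw r (ne_of_mem_erase hr))
        _ ≤ ∑ _r : ZMod N, η :=
            sum_le_sum_of_subset_of_nonneg (erase_subset _ _) fun _ _ _ => hη
        _ = N * η := by rw [sum_const, card_univ, ZMod.card, nsmul_eq_mul]
  rw [← mul_le_mul_iff_left₀ hN, card_signRelations_mul, mul_assoc]
  gcongr
  calc _ ≤ 1 + N * η := sum_le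
    _ = (1 / N + η) * N := by field_simp

lemma card_lt_bias_le {η : ℝ} (hη : 0 < η) :
    (#{w : ι → ZMod N | η < bias w} : ℝ) ≤
      η⁻¹ ^ 6 * (∑ x : ZMod N, cosChar x ^ 6) ^ Fintype.card ι := by
  have bias_pow_six (w : ι → ZMod N) : bias w ^ 6 = ∏ i, cosChar (w i) ^ 6 := by
    rw [bias, Even.pow_abs (by decide), prod_pow]
  rw [inv_pow, inv_mul_eq_div, le_div_iff₀ (by positivity), ← nsmul_eq_mul, ← sum_const]
  calc ∑ _w with η < bias _w, η ^ 6
      ≤ ∑ w : ι → ZMod N with η < bias w, bias w ^ 6 :=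
        sum_le_sum fun w hw => pow_le_pow_left₀ hη.le (mem_filter.mp hw).2.le 6
    _ ≤ ∑ w : ι → ZMod N, bias w ^ 6 :=
        sum_le_sum_of_subset_of_nonneg (filter_subset _ _) fun w _ _ => by
          rw [bias]; positivity
    _ = (∑ x : ZMod N, cosChar x ^ 6) ^ Fintype.card ι := by
        simp_rw [bias_pow_six]
        rw [← Fintype.prod_sum fun (_ : ι) (x : ZMod N) => cosChar x ^ 6, prod_const, card_univ]

end Bias

section Reduction

/-- The coordinatewise residues modulo `N` of an integer vector. -/
def residues (N : ℕ) (v : ι → ℤ) : ι → ZMod N := fun i => v i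

variable [Fintype ι]

lemma exists_isUnit_lt_bias {p j : ℕ} [Fact p.Prime] {η : ℝ} {v : ι → ℤ}
    (hspread : IsSpread η (residues (p ^ j) v)) (hv : ¬IsSpread η (residues (p ^ (j + 1)) v)) :
    ∃ r : ZMod (p ^ (j + 1)), IsUnit r ∧ η < bias (r • residues (p ^ (j + 1)) v) := by
  have hp : p.Prime := Fact.out
  simp only [IsSpread, not_forall, not_le] at hv
  obtain ⟨r, hr, hbias⟩ := hv
  refine ⟨r, by_contra fun not_unit => hbias.not_ge ?_, hbias⟩
  have dvd_val : p ∣ r.val := by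
    rw [← ZMod.natCast_zmod_val r, ZMod.isUnit_iff_coprime] at not_unit
    contrapose! not_unit
    exact (Nat.Coprime.pow_left _ ((hp.coprime_iff_not_dvd).mpr not_unit)).symm
  obtain ⟨s, hs⟩ := dvd_val
  have r_eq : r = p * s := by rw [← ZMod.natCast_zmod_val r, hs, Nat.cast_mul]
  have bias_eq : bias (r • residues (p ^ (j + 1)) v) =
      bias ((s : ZMod (p ^ j)) • residues (p ^ j) v) := by
    simp only [bias, Pi.smul_apply, smul_eq_mul, residues, r_eq]
    congr 2 with i
    have := cosChar_natCast_mul_intCast (N := p ^ j) (pow_succ' p j) (s * v i)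
    push_cast at this
    rw [mul_assoc, this]
  rw [bias_eq]
  refine hspread _ fun s_eq => hr ?_
  rw [ZMod.natCast_eq_zero_iff] at s_eq
  rw [← ZMod.natCast_zmod_val r, hs, ZMod.natCast_eq_zero_iff, pow_succ']
  exact mul_dvd_mul_left p s_eq

lemma exists_isSpread_not_isSpread_succ {p : ℕ} [NeZero p] {η : ℝ} {v : ι → ℤ} {b : ℕ}
    (h : ¬IsSpread η (residues (p ^ b) v)) :
    ∃ j < b, IsSpread η (residues (p ^ j) v) ∧ ¬IsSpread η (residues (p ^ (j + 1)) v) := by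
  by_contra! step
  have isSpread (j : ℕ) (hj : j ≤ b) : IsSpread η (residues (p ^ j) v) := by
    induction j with
    | zero => exact fun r hr => absurd (Subsingleton.elim (α := ZMod 1) r 0) hr
    | succ j ih => exact step j hj (ih (by lia))
  exact h (isSpread b le_rfl)

variable [DecidableEq ι]

/-- Bound on the proportion of sign vectors that annihilate, modulo `3 ^ (j + 1)`, a vector that is
nonzero modulo `3` and `η`-spread modulo `3 ^ j`. For `j = 0` it is `1 / 3 + |cos (2 π / 3)|`. -/
noncomputable def levelBound (η : ℝ) : ℕ → ℝ
  | 0 => 5 / 6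
  | j + 1 => 1 / 3 ^ (j + 1) + η

lemma levelBound_nonneg {η : ℝ} (hη : 0 ≤ η) (j : ℕ) : 0 ≤ levelBound η j := by
  cases j <;> simp only [levelBound] <;> positivity

lemma card_signRelations_le_levelBound {η : ℝ} (hη : 0 ≤ η) {v : ι → ℤ} {i : ι}
    (hi : ¬(3 : ℤ) ∣ v i) {j : ℕ} (hv : IsSpread η (residues (3 ^ j) v)) :
    (#(signRelations (residues (3 ^ (j + 1)) v)) : ℝ) ≤
      2 ^ Fintype.card ι * levelBound η j := by
  cases j with
  | zero =>
    have hi3 : residues 3 v i ≠ 0 := mt (ZMod.intCast_zmod_eq_zero_iff_dvd _ 3).mp hi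
    calc (#(signRelations (residues 3 v)) : ℝ)
        ≤ 2 ^ Fintype.card ι * (1 / (3 : ℕ) + 1 / 2) :=
          (isSpread_half_of_ne_zero hi3).card_signRelations_le one_half_pos.le
      _ = 2 ^ Fintype.card ι * levelBound η 0 := by norm_num [levelBound]
  | succ j =>
    have subset := signRelations_subset_comp
      (ZMod.castHom (pow_dvd_pow 3 (j + 1).le_succ) (ZMod (3 ^ (j + 1)))).toAddMonoidHom
      (residues (3 ^ (j + 2)) v)
    have comp_eq : (ZMod.castHom (pow_dvd_pow 3 (j + 1).le_succ)
        (ZMod (3 ^ (j + 1)))).toAddMonoidHom ∘ residues (3 ^ (j + 2)) v =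
          residues (3 ^ (j + 1)) v := by
      ext i
      exact map_intCast (ZMod.castHom (pow_dvd_pow 3 (j + 1).le_succ) _) (v i)
    rw [comp_eq] at subset
    calc (#(signRelations (residues (3 ^ (j + 2)) v)) : ℝ)
        ≤ #(signRelations (residues (3 ^ (j + 1)) v)) := mod_cast card_le_card subset
      _ ≤ 2 ^ Fintype.card ι * (1 / (3 ^ (j + 1) : ℕ) + η) := hv.card_signRelations_le hη
      _ = 2 ^ Fintype.card ι * levelBound η (j + 1) := by rw [levelBound, Nat.cast_pow]; rfl

lemma sum_cosChar_pow_six_mul_levelBound_le {η : ℝ} (hη : 0 ≤ η) {j b : ℕ} (hj : j < b) :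
    (∑ x : ZMod (3 ^ (j + 1)), cosChar x ^ 6) * levelBound η j ≤
      15 / 16 + 5 / 16 * (3 ^ b * η) := by
  cases j with
  | zero =>
    have : 0 ≤ 3 ^ b * η := by positivity
    calc (∑ x : ZMod 3, cosChar x ^ 6) * (5 / 6)
        = 55 / 64 := by rw [sum_cosChar_pow_six_three]; norm_num
      _ ≤ _ := by linarith
  | succ j =>
    have seven_le : 7 ≤ 3 ^ (j + 2) := by
      calc 7 ≤ 3 ^ 2 := by norm_num
        _ ≤ 3 ^ (j + 2) := Nat.pow_le_pow_right (by norm_num) (by lia)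
    rw [sum_cosChar_pow_six_of_seven_le seven_le, levelBound]
    calc 5 / 16 * ((3 ^ (j + 2) : ℕ) : ℝ) * (1 / 3 ^ (j + 1) + η)
        = 15 / 16 + 5 / 16 * (3 ^ (j + 2) * η) := by push_cast; field_simp; ring
      _ ≤ 15 / 16 + 5 / 16 * (3 ^ b * η) := by gcongr <;> first | lia | norm_num

end Reduction

section SingularSignMatrices

/-- The `±1` matrix over `R` whose rows are the sign vectors `S k`. -/
def signMatrix (R : Type*) [Ring R] (S : ι → ι → ℤˣ) : Matrix ι ι R :=
  of fun i j => ((S i j : ℤ) : R)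

variable [Fintype ι] [DecidableEq ι]

/-- The singular sign matrices. -/
noncomputable def singularSigns (ι : Type*) [Fintype ι] [DecidableEq ι] :
    Finset (ι → ι → ℤˣ) :=
  {S | (signMatrix ℝ S).det = 0}

lemma mem_singularSigns {S : ι → ι → ℤˣ} :
    S ∈ singularSigns ι ↔ (signMatrix ℝ S).det = 0 := by
  simp [singularSigns]

lemma det_signMatrix_real (S : ι → ι → ℤˣ) :
    (signMatrix ℝ S).det = ((signMatrix ℤ S).det : ℝ) := by
  rw [Int.cast_det]
  rfl

lemma card_exists_apply_eq_le {κ : Type*} [Fintype κ] [DecidableEq κ] (a : κ) :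
    #{w : ι → κ | ∃ i, w i = a} ≤ Fintype.card ι * Fintype.card κ ^ (Fintype.card ι - 1) := by
  have card_apply_eq (i : ι) :
      #{w : ι → κ | w i = a} = Fintype.card κ ^ (Fintype.card ι - 1) := by
    rw [← Fintype.piFinset_univ, Fintype.card_filter_piFinset_const_eq_of_mem _ i (mem_univ a),
      card_univ]
  calc #{w : ι → κ | ∃ i, w i = a}
      ≤ #(univ.biUnion fun i => {w : ι → κ | w i = a}) :=
        card_le_card fun w hw => by simpa using hw
    _ ≤ Fintype.card ι * Fintype.card κ ^ (Fintype.card ι - 1) :=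
        card_biUnion_le_card_mul _ _ _ fun i _ => (card_apply_eq i).le

lemma exists_mulVec_eq_zero_not_dvd {A : Matrix ι ι ℤ} (hA : A.det = 0) {p : ℤ}
    (hp : ¬IsUnit p) : ∃ v, A *ᵥ v = 0 ∧ ∃ i, ¬p ∣ v i := by
  obtain ⟨w, hw, hAw⟩ := exists_mulVec_eq_zero_iff.mpr hA
  obtain ⟨i₀, hi₀⟩ := Function.ne_iff.mp hw
  obtain ⟨v, hwv, hv⟩ := extract_gcd w ⟨i₀, mem_univ i₀⟩
  have w_eq : w = univ.gcd w • v := funext fun i => hwv i (mem_univ i)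
  have gcd_ne_zero : univ.gcd w ≠ 0 := fun h => hi₀ (by rw [hwv i₀ (mem_univ i₀), h, zero_mul]; rfl)
  refine ⟨v, ?_, ?_⟩
  · rw [w_eq, mulVec_smul] at hAw
    exact (smul_eq_zero.mp hAw).resolve_left gcd_ne_zero
  · by_contra! hdvd
    exact hp (isUnit_of_dvd_one (hv ▸ dvd_gcd fun i _ => hdvd i))

lemma mem_signRelations_residues {S : ι → ι → ℤˣ} {v : ι → ℤ} (hv : signMatrix ℤ S *ᵥ v = 0)
    (N : ℕ) (k : ι) : S k ∈ signRelations (residues N v) := by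
  have row_eq_zero : ∑ i, S k i • v i = 0 := by
    simpa [signMatrix, mulVec, dotProduct, Units.smul_def] using congrFun hv k
  exact signRelations_subset_comp (Int.castAddHom (ZMod N)) v (mem_signRelations.mpr row_eq_zero)

variable {N : ℕ} [NeZero N]

/-- The vectors having a coordinate `1` and at most `2 ^ card ι * ρ` sign relations. -/
noncomputable def normalised (N : ℕ) [NeZero N] (ρ : ℝ) : Finset (ι → ZMod N) :=
  {w | (∃ i, w i = 1) ∧ #(signRelations w) ≤ 2 ^ Fintype.card ι * ρ}

/-- The vectors of bias larger than `η` having at most `2 ^ card ι * ρ` sign relations. -/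
noncomputable def biased (N : ℕ) [NeZero N] (η ρ : ℝ) : Finset (ι → ZMod N) :=
  {w | η < bias w ∧ #(signRelations w) ≤ 2 ^ Fintype.card ι * ρ}

lemma card_annihilators_normalised_le {ρ : ℝ} (hρ : 0 ≤ ρ) :
    (#(annihilators (normalised (ι := ι) N ρ)) : ℝ) ≤
      (2 ^ Fintype.card ι) ^ Fintype.card ι *
        (Fintype.card ι / N * (N * ρ) ^ Fintype.card ι) := by
  have hN : (N : ℝ) ≠ 0 := Nat.cast_ne_zero.mpr (NeZero.ne N)
  have card_normalised_le :
      #(normalised (ι := ι) N ρ) ≤ Fintype.card ι * N ^ (Fintype.card ι - 1) := by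
    have h := card_exists_apply_eq_le (ι := ι) (1 : ZMod N)
    rw [ZMod.card] at h
    exact (card_le_card (monotone_filter_right _ fun w _ hw => hw.1)).trans h
  calc (#(annihilators (normalised (ι := ι) N ρ)) : ℝ)
      ≤ #(normalised (ι := ι) N ρ) * (2 ^ Fintype.card ι * ρ) ^ Fintype.card ι :=
        card_annihilators_le fun w hw => (mem_filter.mp hw).2.2
    _ ≤ (Fintype.card ι * N ^ (Fintype.card ι - 1)) *
          (2 ^ Fintype.card ι * ρ) ^ Fintype.card ι := by
        gcongr
        exact_mod_cast card_normalised_le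
    _ = (2 ^ Fintype.card ι) ^ Fintype.card ι *
          (Fintype.card ι / N * (N * ρ) ^ Fintype.card ι) := by
        cases h : Fintype.card ι with
        | zero => simp
        | succ n =>
          rw [Nat.add_sub_cancel, mul_pow, mul_pow, pow_succ (N : ℝ)]
          field_simp

lemma card_annihilators_biased_le {η ρ : ℝ} (hη : 0 < η) (hρ : 0 ≤ ρ) :
    (#(annihilators (biased (ι := ι) N η ρ)) : ℝ) ≤
      (2 ^ Fintype.card ι) ^ Fintype.card ι *
        (η⁻¹ ^ 6 * ((∑ x : ZMod N, cosChar x ^ 6) * ρ) ^ Fintype.card ι) := by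
  calc (#(annihilators (biased (ι := ι) N η ρ)) : ℝ)
      ≤ #(biased (ι := ι) N η ρ) * (2 ^ Fintype.card ι * ρ) ^ Fintype.card ι :=
        card_annihilators_le fun w hw => (mem_filter.mp hw).2.2
    _ ≤ (η⁻¹ ^ 6 * (∑ x : ZMod N, cosChar x ^ 6) ^ Fintype.card ι) *
          (2 ^ Fintype.card ι * ρ) ^ Fintype.card ι := by
        gcongr
        refine le_trans (Nat.cast_le.mpr ?_) (card_lt_bias_le hη)
        exact card_le_card (monotone_filter_right _ fun w _ hw => hw.1)
    _ = _ := by rw [mul_pow, mul_pow]; ring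

lemma singularSigns_subset {η : ℝ} (hη : 0 ≤ η) (b : ℕ) :
    singularSigns ι ⊆ annihilators (normalised (3 ^ b) (1 / 3 ^ b + η)) ∪
      (range b).biUnion fun j => annihilators (biased (3 ^ (j + 1)) η (levelBound η j)) := by
  intro S hS
  rw [mem_singularSigns, det_signMatrix_real, Int.cast_eq_zero] at hS
  obtain ⟨v, hSv, i, hi⟩ := exists_mulVec_eq_zero_not_dvd hS
    Int.prime_three.not_isUnit
  have mem_unit_smul {N : ℕ} (u : (ZMod N)ˣ) (k : ι) : S k ∈ signRelations (u • residues N v) := by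
    rw [signRelations_unit_smul]
    exact mem_signRelations_residues hSv N k
  rw [mem_union, mem_biUnion]
  by_cases hspread : IsSpread η (residues (3 ^ b) v)
  · left
    obtain ⟨u, hu⟩ : IsUnit (residues (3 ^ b) v i) := by
      rw [residues, ZMod.coe_int_isUnit_iff_isCoprime, Nat.cast_pow]
      exact (Int.prime_three.coprime_iff_not_dvd.mpr hi).pow_left
    refine mem_annihilators.mpr ⟨u⁻¹ • residues (3 ^ b) v, ?_, mem_unit_smul u⁻¹⟩
    have := hspread.card_signRelations_le hη
    push_cast at this
    refine mem_filter.mpr ⟨mem_univ _, ⟨i, ?_⟩, ?_⟩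
    · rw [Pi.smul_apply, ← hu, Units.smul_def, smul_eq_mul, Units.inv_mul]
    · rwa [signRelations_unit_smul]
  · right
    obtain ⟨j, hj, hspread, hnot⟩ := exists_isSpread_not_isSpread_succ hspread
    obtain ⟨_, ⟨u, rfl⟩, hu⟩ := exists_isUnit_lt_bias hspread hnot
    refine ⟨j, mem_range.mpr hj, mem_annihilators.mpr
      ⟨u • residues (3 ^ (j + 1)) v, mem_filter.mpr ⟨mem_univ _, hu, ?_⟩, mem_unit_smul u⟩⟩
    rw [signRelations_unit_smul]
    exact card_signRelations_le_levelBound hη hi hspread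

lemma card_singularSigns_le {η : ℝ} (hη : 0 < η) (b : ℕ) :
    (#(singularSigns ι) : ℝ) ≤ (2 ^ Fintype.card ι) ^ Fintype.card ι *
      (Fintype.card ι / 3 ^ b * (1 + 3 ^ b * η) ^ Fintype.card ι +
        b * (η⁻¹ ^ 6 * (15 / 16 + 5 / 16 * (3 ^ b * η)) ^ Fintype.card ι)) := by
  set n := Fintype.card ι
  have card_biased_le (j : ℕ) (hj : j ∈ range b) :
      (#(annihilators (biased (ι := ι) (3 ^ (j + 1)) η (levelBound η j))) : ℝ) ≤
        (2 ^ n) ^ n * (η⁻¹ ^ 6 * (15 / 16 + 5 / 16 * (3 ^ b * η)) ^ n) := by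
    refine (card_annihilators_biased_le hη (levelBound_nonneg hη.le j)).trans ?_
    gcongr
    · exact mul_nonneg (sum_nonneg fun x _ => by positivity) (levelBound_nonneg hη.le j)
    · exact sum_cosChar_pow_six_mul_levelBound_le hη.le (mem_range.mp hj)
  calc (#(singularSigns ι) : ℝ)
      ≤ #(annihilators (normalised (ι := ι) (3 ^ b) (1 / 3 ^ b + η))) +
          ∑ j ∈ range b,
            (#(annihilators (biased (ι := ι) (3 ^ (j + 1)) η (levelBound η j))) : ℝ) := by
        exact_mod_cast (card_le_card (singularSigns_subset hη.le b)).trans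
          ((card_union_le _ _).trans (Nat.add_le_add_left card_biUnion_le _))
    _ ≤ (2 ^ n) ^ n * (n / (3 ^ b : ℕ) * ((3 ^ b : ℕ) * (1 / 3 ^ b + η)) ^ n) +
          ∑ _j ∈ range b, (2 ^ n) ^ n * (η⁻¹ ^ 6 * (15 / 16 + 5 / 16 * (3 ^ b * η)) ^ n) :=
        add_le_add (card_annihilators_normalised_le (by positivity)) (sum_le_sum card_biased_le)
    _ = _ := by
        have cancel : (3 : ℝ) ^ b * (1 / 3 ^ b + η) = 1 + 3 ^ b * η := by field_simp
        rw [sum_const, card_range, nsmul_eq_mul, Nat.cast_pow, Nat.cast_ofNat, cancel]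
        ring

end SingularSignMatrices

section Asymptotics

open Filter Topology

lemma one_add_one_div_pow_le_three (n : ℕ) : (1 + 1 / (n : ℝ)) ^ n ≤ 3 := by
  calc (1 + 1 / (n : ℝ)) ^ n ≤ Real.exp (1 / n) ^ n := by
        gcongr
        rw [add_comm]
        exact Real.add_one_le_exp _
    _ = Real.exp (n * (1 / n)) := (Real.exp_nat_mul _ n).symm
    _ ≤ Real.exp 1 := Real.exp_le_exp.mpr (by rw [mul_one_div]; exact div_self_le_one _)
    _ ≤ 3 := Real.exp_one_lt_three.le

lemma card_singularSigns_div_le {n : ℕ} (hn : 16 ≤ n) :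
    (#(singularSigns (Fin n)) : ℝ) / (2 ^ n) ^ n ≤
      3 / n ^ 2 + 3 * n ^ 3 * ((3 * n ^ 4) ^ 6 * (245 / 256) ^ n) := by
  have hn16 : (16 : ℝ) ≤ n := mod_cast hn
  have : (0 : ℝ) < n := by linarith
  obtain ⟨a, pow_le, lt_pow⟩ := exists_nat_pow_near (one_le_pow₀ (by linarith) : 1 ≤ (n : ℝ) ^ 3)
    (by norm_num : (1 : ℝ) < 3)
  set b := a + 1
  have pow_le : (3 : ℝ) ^ b ≤ 3 * n ^ 3 := by rw [pow_succ']; gcongr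
  have b_le : (b : ℝ) ≤ 3 * n ^ 3 :=
    le_trans (mod_cast (Nat.lt_pow_self (by norm_num)).le) pow_le
  have base_le : 15 / 16 + 5 / 16 * (1 / (n : ℝ)) ≤ 245 / 256 := by
    have : 1 / (n : ℝ) ≤ 1 / 16 := one_div_le_one_div_of_le (by norm_num) hn16
    linarith
  have pow_mul_eta : (3 : ℝ) ^ b * (1 / (n * 3 ^ b)) = 1 / n := by field_simp
  have card_le := card_singularSigns_le (ι := Fin n) (η := 1 / (n * 3 ^ b)) (by positivity) b
  rw [Fintype.card_fin, pow_mul_eta, one_div (_ * _), inv_inv] at card_le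
  calc (#(singularSigns (Fin n)) : ℝ) / (2 ^ n) ^ n
      ≤ n / 3 ^ b * (1 + 1 / n) ^ n +
          b * ((n * 3 ^ b) ^ 6 * (15 / 16 + 5 / 16 * (1 / n)) ^ n) := by
        rwa [div_le_iff₀' (by positivity)]
    _ ≤ n / n ^ 3 * 3 + 3 * n ^ 3 * ((n * (3 * n ^ 3)) ^ 6 * (245 / 256) ^ n) := by
        gcongr
        exact one_add_one_div_pow_le_three n
    _ = 3 / n ^ 2 + 3 * n ^ 3 * ((3 * n ^ 4) ^ 6 * (245 / 256) ^ n) := by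
        field_simp

lemma tendsto_succ_mul_card_singularSigns_div :
    Tendsto (fun n : ℕ => ((n : ℝ) + 1) * (#(singularSigns (Fin n)) / (2 ^ n) ^ n))
      atTop (𝓝 0) := by
  have bound_tendsto : Tendsto (fun n : ℕ => 6 * (1 / (n : ℝ)) +
      4374 * ((n : ℝ) ^ 28 * (245 / 256 : ℝ) ^ n)) atTop (𝓝 0) := by
    have linear := (tendsto_one_div_atTop_nhds_zero_nat (𝕜 := ℝ)).const_mul 6
    have geometric := (tendsto_pow_const_mul_const_pow_of_abs_lt_one 28
      (r := (245 / 256 : ℝ)) (by norm_num [abs_of_pos])).const_mul 4374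
    simpa using linear.add geometric
  refine squeeze_zero' (Eventually.of_forall fun n => by positivity) ?_ bound_tendsto
  filter_upwards [eventually_ge_atTop 16] with n hn
  have hn1 : (1 : ℝ) ≤ n := mod_cast (by lia : 1 ≤ n)
  calc ((n : ℝ) + 1) * (#(singularSigns (Fin n)) / (2 ^ n) ^ n)
      ≤ (n + n) * (3 / n ^ 2 + 3 * n ^ 3 * ((3 * n ^ 4) ^ 6 * (245 / 256) ^ n)) := by
        gcongr
        exact card_singularSigns_div_le hn
    _ = 6 * (1 / n) + 4374 * (n ^ 28 * (245 / 256) ^ n) := by field_simp; ring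

end Asymptotics

section ColumnFlips

/-- The zero-one matrix obtained from a sign matrix by replacing `-1` with `0`. -/
noncomputable def zeroOneMatrix (S : ι → ι → ℤˣ) : Matrix ι ι ℝ :=
  of fun i j => (1 + ((S i j : ℤ) : ℝ)) / 2

lemma zeroOneMatrix_injective : Function.Injective (zeroOneMatrix (ι := ι)) := by
  intro S T h
  ext i j
  simpa [zeroOneMatrix] using congrFun (congrFun h i) j

lemma exists_zeroOneMatrix_eq_iff {M : Matrix ι ι ℝ} :
    (∃ S, zeroOneMatrix S = M) ↔ ∀ i j, M i j = 0 ∨ M i j = 1 := by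
  constructor
  · rintro ⟨S, rfl⟩ i j
    rcases Int.units_eq_one_or (S i j) with h | h <;> simp [zeroOneMatrix, h]
  · intro hM
    refine ⟨fun i j => if M i j = 1 then 1 else -1, ?_⟩
    ext i j
    rcases hM i j with h | h <;> simp [zeroOneMatrix, h]

/-- The sign matrix obtained from `S` by multiplying the `j`-th column by `ε j`. -/
def flipColumns (ε : ι → ℤˣ) (S : ι → ι → ℤˣ) : ι → ι → ℤˣ := fun i => ε * S i

lemma flipColumns_flipColumns (δ ε : ι → ℤˣ) (S : ι → ι → ℤˣ) :
    flipColumns δ (flipColumns ε S) = flipColumns (δ * ε) S :=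
  funext fun _ => (mul_assoc _ _ _).symm

lemma flipColumns_involutive (ε : ι → ℤˣ) : Function.Involutive (flipColumns ε) := by
  intro S
  ext i j
  simp [flipColumns, ← mul_assoc]

variable [Fintype ι]

lemma zeroOneMatrix_mulVec (S : ι → ι → ℤˣ) (v : ι → ℝ) :
    zeroOneMatrix S *ᵥ v = (2 : ℝ)⁻¹ • (signMatrix ℝ S *ᵥ v + (∑ j, v j) • 1) := by
  ext i
  simp only [mulVec, dotProduct, zeroOneMatrix, signMatrix, of_apply, Pi.smul_apply, Pi.add_apply,
    Pi.one_apply, smul_eq_mul, mul_one, ← sum_add_distrib, mul_sum]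
  exact sum_congr rfl fun j _ => by ring

lemma signMatrix_flipColumns_mulVec (ε : ι → ℤˣ) (S : ι → ι → ℤˣ) (v : ι → ℝ) :
    signMatrix ℝ (flipColumns ε S) *ᵥ v = signMatrix ℝ S *ᵥ (ε • v) := by
  ext i
  simp only [mulVec, dotProduct, signMatrix, flipColumns, of_apply, Pi.mul_apply, Pi.smul_apply',
    Units.smul_def, zsmul_eq_mul]
  exact sum_congr rfl fun j _ => by push_cast; ring

lemma zeroOneMatrix_mulVec_injective {S : ι → ι → ℤˣ} {y : ι → ℝ}
    (hS : Function.Injective (signMatrix ℝ S).mulVec) (hSy : signMatrix ℝ S *ᵥ y = 1)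
    (hy : 1 + ∑ j, y j ≠ 0) : Function.Injective (zeroOneMatrix S).mulVec := by
  refine (injective_iff_map_eq_zero (zeroOneMatrix S).mulVecLin).mpr fun v hv => ?_
  rw [mulVecLin_apply, zeroOneMatrix_mulVec] at hv
  have Sv_eq : signMatrix ℝ S *ᵥ v = -((∑ j, v j) • 1) :=
    eq_neg_of_add_eq_zero_left ((smul_eq_zero.mp hv).resolve_left (by norm_num))
  have v_eq : v = -(∑ j, v j) • y := hS (by rw [mulVec_smul, hSy, Sv_eq, neg_smul])
  have sum_eq : ∑ j, v j = -(∑ j, v j) * ∑ j, y j := by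
    conv_lhs => rw [v_eq]
    rw [mul_sum]
    rfl
  have sum_eq_zero : ∑ j, v j = 0 :=
    (mul_eq_zero.mp (by linarith : (∑ j, v j) * (1 + ∑ j, y j) = 0)).resolve_right hy
  rw [v_eq, sum_eq_zero, neg_zero, zero_smul]

lemma one_add_sum_neg_of_neg [Nontrivial ι] {S : ι → ι → ℤˣ} {y : ι → ℝ}
    (hS : Function.Injective (signMatrix ℝ S).mulVec) (hSy : signMatrix ℝ S *ᵥ y = 1)
    (hy : ∀ j, y j < 0) : 1 + ∑ j, y j < 0 := by
  classical
  obtain ⟨i, j, hij⟩ : ∃ i j, S i j = 1 := by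
    by_contra! h
    obtain ⟨a, b, hab⟩ := exists_pair_ne ι
    have eq_neg_one (i j : ι) : S i j = -1 := (Int.units_eq_one_or _).resolve_left (h i j)
    have col_eq (i : ι) : signMatrix ℝ S i a = signMatrix ℝ S i b := by
      simp [signMatrix, eq_neg_one]
    exact (isUnit_iff_ne_zero.mp ((isUnit_iff_isUnit_det _).mp
      (mulVec_injective_iff_isUnit.mp hS))) (det_zero_of_column_eq hab col_eq)
  have row_eq : ∑ k, (1 + ((S i k : ℤ) : ℝ)) * y k = 1 + ∑ j, y j := by
    have h : ∑ k, ((S i k : ℤ) : ℝ) * y k = 1 := congrFun hSy i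
    simp_rw [add_mul, one_mul, sum_add_distrib, h, add_comm]
  rw [← row_eq]
  refine sum_neg' (fun k _ => ?_) ⟨j, mem_univ j, ?_⟩
  · rcases Int.units_eq_one_or (S i k) with h | h <;> rw [h] <;> push_cast <;> linarith [hy k]
  · rw [hij]
    push_cast
    linarith [hy j]

variable [DecidableEq ι]

/-- The matrix `M` is invertible and the solution of `M x = 𝟙` has positive coordinates. -/
def HasPosSolution (M : Matrix ι ι ℝ) : Prop := IsUnit M ∧ ∀ j, 0 < (M⁻¹ *ᵥ (1 : ι → ℝ)) j

lemma hasPosSolution_iff {M : Matrix ι ι ℝ} :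
    HasPosSolution M ↔ IsUnit M ∧ ∃ x : ι → ℝ, (∀ j, 0 < x j) ∧ M *ᵥ x = 1 := by
  refine and_congr_right fun hM => ⟨fun hpos => ⟨_, hpos, ?_⟩, ?_⟩
  · rw [mulVec_mulVec, mul_nonsing_inv _ ((isUnit_iff_isUnit_det M).mp hM), one_mulVec]
  · rintro ⟨x, hx, hMx⟩
    rwa [← hMx, mulVec_mulVec, nonsing_inv_mul _ ((isUnit_iff_isUnit_det M).mp hM), one_mulVec]

open Classical in
/-- The sign matrices whose zero-one matrix is counted by `Mcard`. -/
noncomputable def positiveSigns (ι : Type*) [Fintype ι] [DecidableEq ι] :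
    Finset (ι → ι → ℤˣ) :=
  {S | HasPosSolution (zeroOneMatrix S)}

lemma mem_positiveSigns {S : ι → ι → ℤˣ} :
    S ∈ positiveSigns ι ↔ HasPosSolution (zeroOneMatrix S) := by
  simp [positiveSigns]

lemma Mcard_eq_card_positiveSigns (n : ℕ) : Mcard n = #(positiveSigns (Fin n)) := by
  have image_eq : zeroOneMatrix '' (positiveSigns (Fin n) : Set (Fin n → Fin n → ℤˣ)) =
      {M | (∀ i j, M i j = 0 ∨ M i j = 1) ∧ HasPosSolution M} := by
    ext M
    constructor
    · rintro ⟨S, hS, rfl⟩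
      exact ⟨exists_zeroOneMatrix_eq_iff.mp ⟨S, rfl⟩, mem_positiveSigns.mp hS⟩
    · rintro ⟨hM, hpos⟩
      obtain ⟨S, rfl⟩ := exists_zeroOneMatrix_eq_iff.mpr hM
      exact ⟨S, mem_positiveSigns.mpr hpos, rfl⟩
  rw [← Set.ncard_coe_finset, ← Set.ncard_image_of_injective _ zeroOneMatrix_injective, image_eq]
  rfl

lemma eq_one_or_eq_neg_one_of_hasPosSolution {S : ι → ι → ℤˣ} {ε : ι → ℤˣ}
    (hS : HasPosSolution (zeroOneMatrix S))
    (hε : HasPosSolution (zeroOneMatrix (flipColumns ε S))) : ε = 1 ∨ ε = -1 := by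
  obtain ⟨hunit, x, hx, hSx⟩ := hasPosSolution_iff.mp hS
  obtain ⟨-, y, hy, hSy⟩ := hasPosSolution_iff.mp hε
  obtain ⟨κ, hκ⟩ : ∃ κ : ℝ, zeroOneMatrix S *ᵥ (ε • y) = κ • 1 := by
    refine ⟨1 + (∑ j, (ε • y) j - ∑ j, y j) / 2, ?_⟩
    rw [zeroOneMatrix_mulVec, signMatrix_flipColumns_mulVec] at hSy
    ext i
    have hSy_apply := congrFun hSy i
    rw [zeroOneMatrix_mulVec]
    simp only [Pi.smul_apply, Pi.add_apply, Pi.one_apply, smul_eq_mul] at hSy_apply ⊢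
    linarith
  have smul_eq : ε • y = κ • x :=
    mulVec_injective_iff_isUnit.mpr hunit (by rw [hκ, mulVec_smul, hSx])
  have smul_eq_apply (j : ι) : ((ε j : ℤ) : ℝ) * y j = κ * x j := by
    simpa [Units.smul_def] using congrFun smul_eq j
  rcases lt_or_ge 0 κ with hκ | hκ
  · refine Or.inl (funext fun j => (Int.units_eq_one_or (ε j)).resolve_right fun hj => ?_)
    have := smul_eq_apply j
    rw [hj] at this
    push_cast at this
    linarith [hy j, mul_pos hκ (hx j)]
  · refine Or.inr (funext fun j => (Int.units_eq_one_or (ε j)).resolve_left fun hj => ?_)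
    have := smul_eq_apply j
    rw [hj] at this
    push_cast at this
    linarith [hy j, mul_nonpos_of_nonpos_of_nonneg hκ (hx j).le]

/-- The column sign flips that turn `S` into a member of `positiveSigns`. -/
noncomputable def positiveFlips (S : ι → ι → ℤˣ) : Finset (ι → ℤˣ) :=
  {ε | flipColumns ε S ∈ positiveSigns ι}

lemma mem_positiveFlips {S : ι → ι → ℤˣ} {ε : ι → ℤˣ} :
    ε ∈ positiveFlips S ↔ HasPosSolution (zeroOneMatrix (flipColumns ε S)) := by
  simp [positiveFlips, mem_positiveSigns]

lemma card_positiveFlips_le_two (S : ι → ι → ℤˣ) : #(positiveFlips S) ≤ 2 := by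
  rcases (positiveFlips S).eq_empty_or_nonempty with h | ⟨ε, hε⟩
  · simp [h]
  refine (card_le_card (t := {ε, -ε}) fun δ hδ => ?_).trans card_le_two
  rw [mem_positiveFlips] at hε hδ
  have mul_self : ε * ε = 1 := funext fun j => Int.units_mul_self (ε j)
  have flip_eq : flipColumns (δ * ε) (flipColumns ε S) = flipColumns δ S := by
    rw [flipColumns_flipColumns, mul_assoc, mul_self, mul_one]
  have δ_eq : δ = δ * ε * ε := by rw [mul_assoc, mul_self, mul_one]
  rw [← flip_eq] at hδ
  rw [mem_insert, mem_singleton, δ_eq]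
  exact (eq_one_or_eq_neg_one_of_hasPosSolution hε hδ).imp (fun h => by rw [h, one_mul])
    fun h => by rw [h, neg_one_mul]

lemma sum_card_positiveFlips :
    ∑ S : ι → ι → ℤˣ, #(positiveFlips S) = 2 ^ Fintype.card ι * #(positiveSigns ι) := by
  have card_preimage (ε : ι → ℤˣ) :
      #{S | flipColumns ε S ∈ positiveSigns ι} = #(positiveSigns ι) :=
    card_equiv (flipColumns_involutive ε).toPerm fun S => by simp
  have h := sum_card_bipartiteAbove_eq_sum_card_bipartiteBelow (s := univ) (t := univ)
    (fun (S : ι → ι → ℤˣ) (ε : ι → ℤˣ) => flipColumns ε S ∈ positiveSigns ι)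
  calc ∑ S : ι → ι → ℤˣ, #(positiveFlips S)
      = ∑ ε : ι → ℤˣ, #{S | flipColumns ε S ∈ positiveSigns ι} := h
    _ = 2 ^ Fintype.card ι * #(positiveSigns ι) := by
        simp_rw [card_preimage, sum_const, card_univ, Fintype.card_fun, Fintype.card_units_int,
          smul_eq_mul]

lemma hasPosSolution_of_sign [Nontrivial ι] {S : ι → ι → ℤˣ} {y : ι → ℝ}
    (hS : Function.Injective (signMatrix ℝ S).mulVec) (hSy : signMatrix ℝ S *ᵥ y = 1)
    (hy : (∀ j, 0 < y j) ∨ ∀ j, y j < 0) : HasPosSolution (zeroOneMatrix S) := by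
  set σ := ∑ j, y j
  have pos : ∀ j, 0 < 2 / (1 + σ) * y j := by
    rcases hy with hy | hy
    · have : 0 ≤ σ := sum_nonneg fun j _ => (hy j).le
      exact fun j => mul_pos (by positivity) (hy j)
    · have := one_add_sum_neg_of_neg hS hSy hy
      exact fun j => mul_pos_of_neg_of_neg (div_neg_of_pos_of_neg two_pos this) (hy j)
  have one_add_ne_zero : 1 + σ ≠ 0 := by
    obtain ⟨j⟩ := ‹Nontrivial ι›.to_nonempty
    intro h
    simpa [h] using pos j
  refine hasPosSolution_iff.mpr ⟨?_, (2 / (1 + σ)) • y, pos, ?_⟩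
  · exact mulVec_injective_iff_isUnit.mp (zeroOneMatrix_mulVec_injective hS hSy one_add_ne_zero)
  · have sum_eq : ∑ j, ((2 / (1 + σ)) • y) j = 2 / (1 + σ) * σ := (mul_sum _ _ _).symm
    rw [zeroOneMatrix_mulVec, mulVec_smul, hSy, sum_eq, ← add_smul, smul_smul]
    field_simp
    rw [one_smul]

lemma hasPosSolution_flipColumns [Nontrivial ι] {S : ι → ι → ℤˣ} {y : ι → ℝ}
    (hS : Function.Injective (signMatrix ℝ S).mulVec) (hSy : signMatrix ℝ S *ᵥ y = 1)
    {ε : ι → ℤˣ} (hε : (∀ j, 0 < ((ε j : ℤ) : ℝ) * y j) ∨ ∀ j, ((ε j : ℤ) : ℝ) * y j < 0) :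
    HasPosSolution (zeroOneMatrix (flipColumns ε S)) := by
  refine hasPosSolution_of_sign (y := ε • y) ?_ ?_ ?_
  · intro v w h
    simp_rw [signMatrix_flipColumns_mulVec] at h
    exact MulAction.injective ε (hS h)
  · have mul_self : ε * ε = 1 := funext fun j => Int.units_mul_self (ε j)
    rw [signMatrix_flipColumns_mulVec, smul_smul, mul_self, one_smul, hSy]
  · simpa [Units.smul_def] using hε

lemma two_le_card_positiveFlips [Nontrivial ι] {S : ι → ι → ℤˣ}
    (hdet : (signMatrix ℝ S).det ≠ 0)
    (hcol : ∀ i, ((signMatrix ℝ S).updateCol i 1).det ≠ 0) : 2 ≤ #(positiveFlips S) := by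
  have hunit : IsUnit (signMatrix ℝ S).det := isUnit_iff_ne_zero.mpr hdet
  have hS := mulVec_injective_iff_isUnit.mpr ((isUnit_iff_isUnit_det _).mpr hunit)
  set y := (signMatrix ℝ S)⁻¹ *ᵥ 1 with hy
  have hSy : signMatrix ℝ S *ᵥ y = 1 := by
    rw [hy, mulVec_mulVec, mul_nonsing_inv _ hunit, one_mulVec]
  have y_ne_zero (i : ι) : y i ≠ 0 := by
    have cramer_eq := congrFun (det_smul_inv_mulVec_eq_cramer (signMatrix ℝ S) 1 hunit) i
    rw [cramer_apply] at cramer_eq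
    exact right_ne_zero_of_mul (cramer_eq.trans_ne (hcol i))
  have exists_sign (j : ι) : ∃ u : ℤˣ, 0 < ((u : ℤ) : ℝ) * y j := by
    rcases (y_ne_zero j).lt_or_gt with h | h
    · exact ⟨-1, by simpa using h⟩
    · exact ⟨1, by simpa using h⟩
  choose ε hε using exists_sign
  have ne_neg : ε ≠ -ε := by
    obtain ⟨j⟩ := ‹Nontrivial ι›.to_nonempty
    exact fun h => units_ne_neg_self (ε j) (congrFun h j)
  have hnegε (j : ι) : (((-ε) j : ℤ) : ℝ) * y j < 0 := by simpa using hε j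
  rw [← card_pair ne_neg]
  refine card_le_card (insert_subset_iff.mpr ⟨?_, singleton_subset_iff.mpr ?_⟩)
  · exact mem_positiveFlips.mpr (hasPosSolution_flipColumns hS hSy (Or.inl hε))
  · exact mem_positiveFlips.mpr (hasPosSolution_flipColumns hS hSy (Or.inr hnegε))

end ColumnFlips

section ExceptionalSigns

variable [DecidableEq ι]

/-- Multiplication of every row by its `i`-th entry, except that the `i`-th column itself is
kept. -/
def normaliseColumn (i : ι) (S : ι → ι → ℤˣ) : ι → ι → ℤˣ :=
  fun k => S k i • Function.update (S k) i 1

lemma normaliseColumn_involutive (i : ι) : Function.Involutive (normaliseColumn i) := by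
  intro S
  ext k j
  rcases eq_or_ne j i with rfl | hj
  · simp [normaliseColumn]
  · simp [normaliseColumn, hj, ← mul_assoc]

variable [Fintype ι]

lemma signMatrix_normaliseColumn (i : ι) (S : ι → ι → ℤˣ) :
    signMatrix ℝ (normaliseColumn i S) =
      diagonal (fun k => ((S k i : ℤ) : ℝ)) * (signMatrix ℝ S).updateCol i 1 := by
  ext k j
  rcases eq_or_ne j i with rfl | hj
  · simp [normaliseColumn, signMatrix]
  · simp [normaliseColumn, signMatrix, hj]

/-- The sign matrices `S` for which `S` or one of the numerators `det (S.updateCol i 𝟙)` of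
Cramer's rule for `S x = 𝟙` is singular. -/
noncomputable def exceptionalSigns (ι : Type*) [Fintype ι] [DecidableEq ι] :
    Finset (ι → ι → ℤˣ) :=
  singularSigns ι ∪ univ.biUnion fun i => {S | ((signMatrix ℝ S).updateCol i 1).det = 0}

lemma card_exceptionalSigns_le :
    #(exceptionalSigns ι) ≤ (Fintype.card ι + 1) * #(singularSigns ι) := by
  have card_column_le (i : ι) :
      #{S : ι → ι → ℤˣ | ((signMatrix ℝ S).updateCol i 1).det = 0} ≤ #(singularSigns ι) := by
    refine card_le_card_of_injOn (normaliseColumn i) (fun S hS => ?_)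
      (normaliseColumn_involutive i).injective.injOn
    rw [mem_coe, mem_filter] at hS
    rw [mem_coe, mem_singularSigns, signMatrix_normaliseColumn, det_mul, hS.2, mul_zero]
  calc #(exceptionalSigns ι)
      ≤ #(singularSigns ι) + Fintype.card ι * #(singularSigns ι) :=
        (card_union_le _ _).trans <| Nat.add_le_add_left
          (card_biUnion_le_card_mul _ _ _ fun i _ => card_column_le i) _
    _ = (Fintype.card ι + 1) * #(singularSigns ι) := by ring

lemma two_pow_mul_card_positiveSigns_le :
    2 ^ Fintype.card ι * #(positiveSigns ι) ≤ 2 * (2 ^ Fintype.card ι) ^ Fintype.card ι := by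
  rw [← sum_card_positiveFlips]
  refine (sum_le_card_nsmul _ _ 2 fun S _ => card_positiveFlips_le_two S).trans_eq ?_
  simp [mul_comm]

lemma le_two_pow_mul_card_positiveSigns_add [Nontrivial ι] :
    2 * (2 ^ Fintype.card ι) ^ Fintype.card ι ≤
      2 ^ Fintype.card ι * #(positiveSigns ι) +
        2 * ((Fintype.card ι + 1) * #(singularSigns ι)) := by
  have two_le (S : ι → ι → ℤˣ) (hS : S ∈ (exceptionalSigns ι)ᶜ) : 2 ≤ #(positiveFlips S) := by
    simp only [exceptionalSigns, mem_compl, mem_union, mem_singularSigns, mem_biUnion, mem_filter,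
      mem_univ, true_and, not_or, not_exists] at hS
    exact two_le_card_positiveFlips hS.1 hS.2
  calc 2 * (2 ^ Fintype.card ι) ^ Fintype.card ι
      = #(exceptionalSigns ι)ᶜ • 2 + 2 * #(exceptionalSigns ι) := by
        rw [smul_eq_mul, mul_comm 2 #(exceptionalSigns ι), ← add_mul, card_compl_add_card, mul_comm]
        simp
    _ ≤ ∑ S ∈ (exceptionalSigns ι)ᶜ, #(positiveFlips S) + 2 * #(exceptionalSigns ι) := by
        gcongr
        exact card_nsmul_le_sum _ _ _ two_le
    _ ≤ ∑ S, #(positiveFlips S) + 2 * #(exceptionalSigns ι) := by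
        gcongr
        exact subset_univ _
    _ ≤ _ := by
        rw [sum_card_positiveFlips]
        gcongr
        exact card_exceptionalSigns_le

end ExceptionalSigns

section Ratio

lemma two_pow_mul_two_pow_sq_sub (n : ℕ) :
    (2 : ℝ) ^ n * 2 ^ (n ^ 2 - n + 1) = 2 * (2 ^ n) ^ n := by
  have : n ≤ n ^ 2 := Nat.le_self_pow two_ne_zero n
  rw [← pow_add, ← pow_mul, ← pow_succ', ← sq]
  congr 1
  lia

lemma Mcard_div_eq (n : ℕ) :
    (Mcard n : ℝ) / 2 ^ (n ^ 2 - n + 1) =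
      2 ^ n * #(positiveSigns (Fin n)) / (2 * (2 ^ n) ^ n) := by
  rw [Mcard_eq_card_positiveSigns, ← two_pow_mul_two_pow_sq_sub,
    mul_div_mul_left _ _ (by positivity)]

lemma Mcard_div_le_one (n : ℕ) : (Mcard n : ℝ) / 2 ^ (n ^ 2 - n + 1) ≤ 1 := by
  have h := two_pow_mul_card_positiveSigns_le (ι := Fin n)
  rw [Fintype.card_fin] at h
  rw [Mcard_div_eq, div_le_one (by positivity)]
  exact_mod_cast h

lemma one_sub_le_Mcard_div {n : ℕ} (hn : 2 ≤ n) :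
    1 - (n + 1) * (#(singularSigns (Fin n)) / (2 ^ n) ^ n) ≤
      (Mcard n : ℝ) / 2 ^ (n ^ 2 - n + 1) := by
  have : Nontrivial (Fin n) := Fin.nontrivial_iff_two_le.mpr hn
  have h := le_two_pow_mul_card_positiveSigns_add (ι := Fin n)
  rw [Fintype.card_fin] at h
  have h : 2 * ((2 : ℝ) ^ n) ^ n ≤
      2 ^ n * #(positiveSigns (Fin n)) + 2 * ((n + 1) * #(singularSigns (Fin n))) :=
    mod_cast h
  rw [Mcard_div_eq, le_div_iff₀ (by positivity)]
  calc (1 - ((n : ℝ) + 1) * (#(singularSigns (Fin n)) / (2 ^ n) ^ n)) * (2 * (2 ^ n) ^ n)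
      = 2 * (2 ^ n) ^ n - 2 * ((n + 1) * #(singularSigns (Fin n))) := by field_simp
    _ ≤ 2 ^ n * #(positiveSigns (Fin n)) := by linarith

end Ratio

end SignMatrix

/-- Lemma (Lemma `lem:regular3`): `M_n ∼ 2^{n²−n+1}`. -/
theorem Mcard_asymptotic :
    Filter.Tendsto (fun n : ℕ => (Mcard n : ℝ) / 2 ^ (n ^ 2 - n + 1))
      Filter.atTop (nhds 1) := by
  have lower_tendsto := SignMatrix.tendsto_succ_mul_card_singularSigns_div.const_sub 1
  rw [sub_zero] at lower_tendsto
  refine tendsto_of_tendsto_of_tendsto_of_le_of_le' lower_tendsto tendsto_const_nhds ?_ ?_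
  · filter_upwards [Filter.eventually_ge_atTop 2] with n hn
    exact SignMatrix.one_sub_le_Mcard_div hn
  · exact Filter.Eventually.of_forall SignMatrix.Mcard_div_le_one
end
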